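/- arXiv:2604.24529 — 11 statements merged into one kernel-verified Lean document; each statement's English description precedes it below -/
import Mathlib

section
/- A normed space X has the Daugavet property if and only if for every y in the unit sphere of X, every x* in the unit sphere of the dual X*, and every ε > 0, there exists y* in the unit sphere of X* such that y*(y) ≥ 1 − ε and ‖x* + y*‖ ≥ 2 − ε. -/
/-- A normed space `X` has the Daugavet property if `‖Id + T‖ = 1 + ‖T‖` for every
rank-one bounded linear operator `T : X → X`, i.e. every operator of the form
`y ↦ f y • x` for a continuous functional `f` and a vector `x`. -/
def DaugavetProperty (X : Type*) [SeminormedAddCommGroup X] [NormedSpace ℝ X] : Prop :=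
  ∀ (f : X →L[ℝ] ℝ) (x : X),
    ‖ContinuousLinearMap.id ℝ X + f.smulRight x‖ = 1 + ‖f.smulRight x‖

lemma exists_apply_gt {X : Type*} [NormedAddCommGroup X] [NormedSpace ℝ X]
    (g : X →L[ℝ] ℝ) (r : ℝ) (hr : r < ‖g‖) : ∃ z : X, ‖z‖ ≤ 1 ∧ r < g z := by
  obtain ⟨z, hz, h⟩ := g.exists_lt_apply_of_lt_opNorm hr
  rw [Real.norm_eq_abs] at h
  rcases le_total 0 (g z) with h0 | h0
  · exact ⟨z, hz.le, by rwa [abs_of_nonneg h0] at h⟩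
  · exact ⟨-z, by rw [norm_neg]; exact hz.le, by rw [abs_of_nonpos h0] at h; simpa using h⟩

lemma apply_le_one {X : Type*} [NormedAddCommGroup X] [NormedSpace ℝ X]
    (g : X →L[ℝ] ℝ) (hg : ‖g‖ = 1) (z : X) (hz : ‖z‖ ≤ 1) : g z ≤ 1 := by
  have h1 := (le_abs_self (g z)).trans (g.le_opNorm z)
  rw [hg] at h1
  linarith

theorem daugavet_iff_functional_codirected
    (X : Type*) [NormedAddCommGroup X] [NormedSpace ℝ X] [Nontrivial X] :
    DaugavetProperty X ↔
      ∀ y : X, ‖y‖ = 1 → ∀ xs : X →L[ℝ] ℝ, ‖xs‖ = 1 → ∀ ε : ℝ, 0 < ε →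
        ∃ ys : X →L[ℝ] ℝ, ‖ys‖ = 1 ∧ ys y ≥ 1 - ε ∧ ‖xs + ys‖ ≥ 2 - ε := by
  constructor
  · intro hD y hy xs hxs ε hε
    have hN := hD xs y
    rw [ContinuousLinearMap.norm_smulRight_apply, hxs, hy] at hN
    set δ := min (ε / 2) (1 / 2) with hδ
    have hδ0 : 0 < δ := by positivity
    have hδ1 : δ ≤ ε / 2 := min_le_left _ _
    have hδ2 : δ ≤ 1 / 2 := min_le_right _ _
    have key : ∃ z : X, ‖z‖ ≤ 1 ∧ 2 - δ < ‖z + xs z • y‖ ∧ 0 ≤ xs z := by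
      obtain ⟨z, hz, h⟩ := ContinuousLinearMap.exists_lt_apply_of_lt_opNorm
        (ContinuousLinearMap.id ℝ X + xs.smulRight y) (r := 2 - δ) (by rw [hN]; linarith)
      have h' : 2 - δ < ‖z + xs z • y‖ := by simpa using h
      rcases le_total 0 (xs z) with h0 | h0
      · exact ⟨z, hz.le, h', h0⟩
      · refine ⟨-z, by rw [norm_neg]; exact hz.le, ?_, by simpa using h0⟩
        have : -z + xs (-z) • y = -(z + xs z • y) := by
          rw [map_neg, neg_smul, neg_add]
        rw [this, norm_neg]
        exact h'
    obtain ⟨z, hz, h, h0⟩ := key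
    obtain ⟨ys, hys, hw⟩ := exists_dual_vector' ℝ (z + xs z • y)
    have hw' : ys z + xs z * ys y = ‖z + xs z • y‖ := by simpa using hw
    have a1 := apply_le_one ys hys z hz
    have a2 := apply_le_one ys hys y hy.le
    have a3 := apply_le_one xs hxs z hz
    have b1 : xs z * ys y ≤ xs z := by nlinarith
    have b2 : 1 - δ < xs z * ys y := by linarith
    have b3 : 0 < ys y := by
      by_contra hc
      push Not at hc
      nlinarith
    have b4 : xs z * ys y ≤ ys y := by nlinarith
    refine ⟨ys, hys, by linarith, ?_⟩
    have c1 := (le_abs_self _).trans ((xs + ys).le_opNorm z)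
    have c2 : (xs + ys) z = xs z + ys z := rfl
    have c3 : ‖xs + ys‖ * ‖z‖ ≤ ‖xs + ys‖ := mul_le_of_le_one_right (norm_nonneg _) hz
    linarith
  · intro H f x
    apply le_antisymm
    · refine (norm_add_le _ _).trans ?_
      rw [ContinuousLinearMap.norm_id]
    by_cases hf : f = 0
    · subst hf
      have : (0 : X →L[ℝ] ℝ).smulRight x = 0 := by ext; simp
      rw [this]; simp
    by_cases hx : x = 0
    · subst hx
      have : f.smulRight (0 : X) = 0 := by ext; simp
      rw [this]; simp
    rw [ContinuousLinearMap.norm_smulRight_apply]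
    have hf' : 0 < ‖f‖ := norm_pos_iff.mpr hf
    have hx' : 0 < ‖x‖ := norm_pos_iff.mpr hx
    set c := ‖f‖ * ‖x‖ with hc
    have hc0 : 0 < c := by positivity
    apply le_of_forall_pos_le_add
    intro η hη
    set ε := min (1 / 2) (η / (2 + 3 * c)) with hε
    have hε0 : 0 < ε := by positivity
    have hε1 : ε ≤ 1 / 2 := min_le_left _ _
    have hε2 : ε * (2 + 3 * c) ≤ η := by
      rw [← le_div_iff₀ (by positivity)]
      exact min_le_right _ _
    have hg : ‖‖f‖⁻¹ • f‖ = 1 := by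
      rw [norm_smul, norm_inv, norm_norm, inv_mul_cancel₀ hf'.ne']
    have hy : ‖‖x‖⁻¹ • x‖ = 1 := by
      rw [norm_smul, norm_inv, norm_norm, inv_mul_cancel₀ hx'.ne']
    obtain ⟨g, hgd⟩ : ∃ g, g = ‖f‖⁻¹ • f := ⟨_, rfl⟩
    obtain ⟨y, hyd⟩ : ∃ y, y = ‖x‖⁻¹ • x := ⟨_, rfl⟩
    rw [← hgd] at hg
    rw [← hyd] at hy
    obtain ⟨ys, hys, h1, h2⟩ := H y hy g hg ε hε0
    obtain ⟨z, hz, h3⟩ := exists_apply_gt (g + ys) (2 - 2 * ε) (by linarith)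
    have h3' : 2 - 2 * ε < g z + ys z := h3
    have a1 := apply_le_one ys hys z hz
    have a2 := apply_le_one g hg z hz
    have e1 : f z = ‖f‖ * g z := by
      rw [hgd]; simp [hf'.ne']
    have e2 : ys x = ‖x‖ * ys y := by
      rw [hyd]; simp [hx'.ne']
    have d1 := (ContinuousLinearMap.id ℝ X + f.smulRight x).le_opNorm z
    have d2 := mul_le_of_le_one_right
      (norm_nonneg (ContinuousLinearMap.id ℝ X + f.smulRight x)) hz
    have d3 : (ContinuousLinearMap.id ℝ X + f.smulRight x) z = z + f z • x := by simp
    rw [d3] at d1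
    have d4 := (le_abs_self _).trans (ys.le_opNorm (z + f z • x))
    rw [hys, one_mul] at d4
    have d5 : ys (z + f z • x) = ys z + c * (g z * ys y) := by
      rw [map_add, map_smul, smul_eq_mul, e1, e2, hc]; ring
    have d6 : 1 - 3 * ε ≤ g z * ys y := by nlinarith
    have d7 : c * (1 - 3 * ε) ≤ c * (g z * ys y) := mul_le_mul_of_nonneg_left d6 hc0.le
    linarith
end

section
/- A normed space X has the Daugavet property if and only if for every ε > 0 and every y in the unit sphere of X, the closed convex hull of the set {u ∈ (1+ε)B_X : ‖y + u‖ ≥ 2 − ε} contains the unit sphere of X. -/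
theorem daugavet_forward
    (X : Type*) [NormedAddCommGroup X] [NormedSpace ℝ X] (h : DaugavetProperty X)
    (ε : ℝ) (hε : 0 < ε) (y : X) (hy : ‖y‖ = 1) (x : X) (hx : ‖x‖ = 1) :
    x ∈ closure (convexHull ℝ {u : X | ‖u‖ ≤ 1 + ε ∧ ‖y + u‖ ≥ 2 - ε}) := by
  set A := {u : X | ‖u‖ ≤ 1 + ε ∧ ‖y + u‖ ≥ 2 - ε} with hA
  by_contra hxC
  obtain ⟨f, s, hf, hs⟩ := geometric_hahn_banach_closed_point
    (convex_convexHull ℝ A).closure isClosed_closure hxC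
  have hfA : ∀ u ∈ A, f u < s := fun u hu => hf u (subset_closure (subset_convexHull ℝ A hu))
  have hyA : y ∈ A := by
    refine ⟨by linarith, ?_⟩
    rw [← two_smul ℝ y, norm_smul, hy]
    norm_num
    exact hε.le
  have hfne : f ≠ 0 := by
    rintro rfl
    have := hfA y hyA
    simp at this hs
    linarith
  have hn : 0 < ‖f‖ := norm_pos_iff.2 hfne
  set n := ‖f‖ with hn_def
  have hfx : f x ≤ n := by
    have := f.le_opNorm x
    rw [hx, mul_one] at this
    exact (le_abs_self _).trans this
  have hsn : s / n < 1 := by rw [div_lt_one hn]; linarith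
  set g := n⁻¹ • f with hg
  have hgn : ‖g‖ = 1 := by
    rw [hg, norm_smul, norm_inv, Real.norm_of_nonneg hn.le]
    exact inv_mul_cancel₀ hn.ne'
  have hD := h g y
  rw [ContinuousLinearMap.norm_smulRight_apply, hgn, hy] at hD
  obtain ⟨δ, hδ, hδ1, hδ2⟩ : ∃ δ : ℝ, 0 < δ ∧ 2 * δ ≤ ε ∧ δ ≤ 1 - s / n :=
    ⟨min (ε / 2) (1 - s / n), lt_min (by linarith) (by linarith),
      by linarith [min_le_left (ε / 2) (1 - s / n)], min_le_right _ _⟩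
  obtain ⟨z, hz1, hz⟩ := ContinuousLinearMap.exists_lt_apply_of_lt_opNorm
    (ContinuousLinearMap.id ℝ X + g.smulRight y) (r := 2 - δ) (by rw [hD]; linarith)
  have key : ∀ w : X, ‖w‖ < 1 → 2 - δ < ‖w + g w • y‖ → 0 ≤ g w → False := by
    intro w hw1 hw hw0
    have hgw : g w ≤ 1 := by
      have := g.le_opNorm w
      rw [hgn, one_mul] at this
      linarith [le_abs_self (g w), Real.norm_eq_abs (g w)]
    have e1 : ‖w + g w • y‖ ≤ ‖w‖ + g w := by
      refine (norm_add_le _ _).trans ?_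
      rw [norm_smul, hy, Real.norm_of_nonneg hw0, mul_one]
    have e2 : ‖w + g w • y‖ ≤ ‖y + w‖ + (1 - g w) := by
      have : w + g w • y = (y + w) - (1 - g w) • y := by module
      rw [this]
      refine (norm_sub_le _ _).trans ?_
      rw [norm_smul, hy, Real.norm_of_nonneg (by linarith), mul_one]
    have := hfA w ⟨by linarith, by linarith⟩
    have e3 : g w = f w / n := by simp [hg]; ring
    have e4 : f w / n < s / n := by gcongr
    linarith
  have hz' : 2 - δ < ‖z + g z • y‖ := by simpa using hz
  rcases le_total 0 (g z) with h0 | h0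
  · exact key z hz1 hz' h0
  · refine key (-z) (by simpa using hz1) ?_ (by simpa using h0)
    have : -z + g (-z) • y = -(z + g z • y) := by simp; abel
    rw [this, norm_neg]; exact hz'

theorem daugavet_backward
    (X : Type*) [NormedAddCommGroup X] [NormedSpace ℝ X] [Nontrivial X]
    (h : ∀ ε : ℝ, 0 < ε → ∀ y : X, ‖y‖ = 1 →
        {x : X | ‖x‖ = 1} ⊆
          closure (convexHull ℝ {u : X | ‖u‖ ≤ 1 + ε ∧ ‖y + u‖ ≥ 2 - ε})) :
    DaugavetProperty X := by
  intro f y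
  have hle : ‖ContinuousLinearMap.id ℝ X + f.smulRight y‖ ≤ 1 + ‖f.smulRight y‖ := by
    refine (norm_add_le _ _).trans ?_
    rw [ContinuousLinearMap.norm_id]
  refine le_antisymm hle ?_
  rcases eq_or_ne f 0 with rfl | hf
  · have : (0 : X →L[ℝ] ℝ).smulRight y = 0 := by ext; simp
    rw [this]; simp
  rcases eq_or_ne y 0 with rfl | hy
  · have : f.smulRight (0 : X) = 0 := by ext; simp
    rw [this]; simp
  clear hle
  have hn : 0 < ‖f‖ := norm_pos_iff.2 hf
  have hb : 0 < ‖y‖ := norm_pos_iff.2 hy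
  rw [ContinuousLinearMap.norm_smulRight_apply]
  set K := ‖ContinuousLinearMap.id ℝ X + f.smulRight y‖ with hK
  have hK0 : 0 ≤ K := norm_nonneg _
  set c := ‖f‖ * ‖y‖ with hc
  have hc0 : 0 < c := mul_pos hn hb
  set y0 := ‖y‖⁻¹ • y with hy0
  have hy0n : ‖y0‖ = 1 := by
    rw [hy0, norm_smul, norm_inv, norm_norm]
    exact inv_mul_cancel₀ hb.ne'
  have hyy : y = ‖y‖ • y0 := by rw [hy0, smul_smul, mul_inv_cancel₀ hb.ne', one_smul]
  have main : ∀ ε : ℝ, 0 < ε → ε < 1 → 1 + c - K ≤ ε * (1 + 3 * c + K) := by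
    intro ε hε hε1
    obtain ⟨x, hx, hfx⟩ : ∃ x : X, ‖x‖ = 1 ∧ ‖f‖ * (1 - ε) < f x := by
      by_contra! hcon
      have : ‖f‖ ≤ ‖f‖ * (1 - ε) := by
        refine ContinuousLinearMap.opNorm_le_of_unit_norm
          (mul_nonneg hn.le (by linarith)) fun x hx => ?_
        rw [Real.norm_eq_abs, abs_le]
        have h1 := hcon x hx
        have h2 := hcon (-x) (by simpa using hx)
        rw [map_neg] at h2
        constructor <;> linarith
      nlinarith
    obtain ⟨u, ⟨hu1, hu2⟩, hfu⟩ : ∃ u ∈ {u : X | ‖u‖ ≤ 1 + ε ∧ ‖y0 + u‖ ≥ 2 - ε},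
        ‖f‖ * (1 - ε) < f u := by
      by_contra! hcon
      have hsub : closure (convexHull ℝ {u : X | ‖u‖ ≤ 1 + ε ∧ ‖y0 + u‖ ≥ 2 - ε}) ⊆
          {w | f w ≤ ‖f‖ * (1 - ε)} := by
        refine closure_minimal (convexHull_min hcon ?_) ?_
        · exact convex_halfSpace_le f.toLinearMap.isLinear _
        · exact isClosed_le f.continuous continuous_const
      have := hsub (h ε hε y0 hy0n hx)
      simp only [Set.mem_setOf_eq] at this
      linarith
    have hfu2 : f u ≤ ‖f‖ * (1 + ε) :=
      (le_abs_self _).trans ((f.le_opNorm u).trans (by gcongr))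
    have ht : |f u * ‖y‖ - c| ≤ c * ε := by
      rw [abs_le, hc]
      constructor <;> nlinarith
    have hKu : ‖u + f u • y‖ ≤ K * (1 + ε) := by
      have := (ContinuousLinearMap.id ℝ X + f.smulRight y).le_opNorm u
      simp only [ContinuousLinearMap.add_apply, ContinuousLinearMap.id_apply,
        ContinuousLinearMap.smulRight_apply] at this
      exact this.trans (by gcongr)
    have h3 : ‖u + c • y0‖ ≤ ‖u + f u • y‖ + c * ε := by
      have : u + c • y0 = (u + f u • y) - (f u * ‖y‖ - c) • y0 := by
        nth_rewrite 1 [hyy]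
        module
      rw [this]
      refine (norm_sub_le _ _).trans ?_
      rw [norm_smul, hy0n, Real.norm_eq_abs, mul_one]
      linarith
    have h4 : 1 + c - ε * (1 + 2 * c) ≤ ‖u + c • y0‖ := by
      rcases le_total c 1 with hc1 | hc1
      · have : y0 + u = (u + c • y0) + (1 - c) • y0 := by module
        have h5 := norm_add_le (u + c • y0) ((1 - c) • y0)
        rw [← this, norm_smul, hy0n, Real.norm_of_nonneg (by linarith)] at h5
        nlinarith
      · have : c • (y0 + u) = (u + c • y0) + (c - 1) • u := by module
        have h5 := norm_add_le (u + c • y0) ((c - 1) • u)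
        rw [← this, norm_smul, norm_smul, Real.norm_of_nonneg hc0.le,
          Real.norm_of_nonneg (by linarith)] at h5
        have h6 : c * (2 - ε) ≤ c * ‖y0 + u‖ := by gcongr
        have h7 : (c - 1) * ‖u‖ ≤ (c - 1) * (1 + ε) :=
          mul_le_mul_of_nonneg_left hu1 (by linarith)
        nlinarith
    nlinarith
  by_contra! hlt
  have hM : 0 < 1 + 3 * c + K := by linarith
  have hd : 0 < 1 + c - K := by linarith
  have := main ((1 + c - K) / (2 * (1 + 3 * c + K))) (by positivity)
    (by rw [div_lt_one (by positivity)]; linarith)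
  have e : (1 + c - K) / (2 * (1 + 3 * c + K)) * (1 + 3 * c + K) = (1 + c - K) / 2 := by
    field_simp
  linarith

theorem daugavet_iff_sphere_subset_closedConvexHull
    (X : Type*) [NormedAddCommGroup X] [NormedSpace ℝ X] [Nontrivial X] :
    DaugavetProperty X ↔
      ∀ ε : ℝ, 0 < ε → ∀ y : X, ‖y‖ = 1 →
        {x : X | ‖x‖ = 1} ⊆
          closure (convexHull ℝ {u : X | ‖u‖ ≤ 1 + ε ∧ ‖y + u‖ ≥ 2 - ε}) :=
  ⟨fun h ε hε y hy x hx => daugavet_forward X h ε hε y hy x hx, daugavet_backward X⟩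
end

section
/- If a normed space X has the Daugavet property, then X has the slice diameter two property; that is, for every x* in the unit sphere of X* and every ε > 0, the slice Slice(B_X, x*, ε) = {x ∈ B_X : x*(x) > 1 − ε} has diameter exactly 2. -/
theorem exists_pos_of_norm_lt {X : Type*} [NormedAddCommGroup X] [NormedSpace ℝ X]
    (xs : X →L[ℝ] ℝ) (A : X →L[ℝ] X) (r : ℝ) (hr : r < ‖A‖) :
    ∃ y : X, ‖y‖ ≤ 1 ∧ 0 ≤ xs y ∧ r < ‖A y‖ := by
  obtain ⟨y, hy, hy2⟩ := A.exists_lt_apply_of_lt_opNorm hr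
  rcases le_total 0 (xs y) with h0 | h0
  · exact ⟨y, hy.le, h0, hy2⟩
  · refine ⟨-y, by simpa using hy.le, by simpa using h0, by simpa using hy2⟩

/-- If a normed space has the Daugavet property, then every slice of the closed unit
ball determined by a norm-one functional has diameter exactly 2 (the slice diameter
two property). -/
theorem daugavet_implies_sliceDiameterTwo
    (X : Type*) [NormedAddCommGroup X] [NormedSpace ℝ X] (h : DaugavetProperty X) :
    ∀ xs : X →L[ℝ] ℝ, ‖xs‖ = 1 → ∀ ε : ℝ, 0 < ε →
      Metric.diam {x : X | ‖x‖ ≤ 1 ∧ xs x > 1 - ε} = 2 := by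
  intro xs hxs ε hε
  have hdist : ∀ x ∈ {x : X | ‖x‖ ≤ 1 ∧ xs x > 1 - ε},
      ∀ y ∈ {x : X | ‖x‖ ≤ 1 ∧ xs x > 1 - ε}, dist x y ≤ 2 := by
    intro x hx y hy
    rw [dist_eq_norm]
    linarith [norm_sub_le x y, hx.1, hy.1]
  have hbdd : Bornology.IsBounded {x : X | ‖x‖ ≤ 1 ∧ xs x > 1 - ε} :=
    Metric.isBounded_iff.2 ⟨2, fun x hx y hy => hdist x hx y hy⟩
  refine le_antisymm (Metric.diam_le_of_forall_dist_le (by norm_num) hdist) ?_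
  refine le_of_forall_pos_le_add fun η hη => ?_
  obtain ⟨δ, hδ, hδε, hδη⟩ : ∃ δ : ℝ, 0 < δ ∧ δ ≤ ε ∧ 2 * δ ≤ η :=
    ⟨min ε (η / 2), by positivity, min_le_left _ _, by linarith [min_le_right ε (η / 2)]⟩
  have hle : ∀ y : X, xs y ≤ ‖y‖ := fun y => by
    have := (le_abs_self _).trans (xs.le_opNorm y)
    rwa [hxs, one_mul] at this
  obtain ⟨x0, hx0, hx00, hx0'⟩ : ∃ y : X, ‖y‖ ≤ 1 ∧ 0 ≤ xs y ∧ 1 - δ < ‖xs y‖ := by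
    obtain ⟨y, hy, hy2⟩ := xs.exists_lt_apply_of_lt_opNorm (r := 1 - δ) (by linarith)
    rcases le_total 0 (xs y) with h0 | h0
    · exact ⟨y, hy.le, h0, hy2⟩
    · exact ⟨-y, by simpa using hy.le, by simpa using h0, by simpa using hy2⟩
  rw [Real.norm_of_nonneg hx00] at hx0'
  have hD := h xs (-x0)
  rw [ContinuousLinearMap.norm_smulRight_apply, hxs, one_mul, norm_neg] at hD
  obtain ⟨y, hy, hy0, hy'⟩ := exists_pos_of_norm_lt xs _ (2 - δ)
    (show 2 - δ < ‖ContinuousLinearMap.id ℝ X + xs.smulRight (-x0)‖ by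
      rw [hD]; linarith [hle x0])
  have e : (ContinuousLinearMap.id ℝ X + xs.smulRight (-x0)) y = y - xs y • x0 := by
    simp [sub_eq_add_neg]
  rw [e] at hy'
  have h1 : ‖xs y • x0‖ ≤ xs y := by
    rw [norm_smul, Real.norm_of_nonneg hy0]
    exact mul_le_of_le_one_right hy0 hx0
  have h2 : 1 - δ < xs y := by linarith [norm_sub_le y (xs y • x0)]
  have hy1 : 0 ≤ 1 - xs y := by linarith [hle y]
  have h3 : ‖(1 - xs y) • x0‖ ≤ 1 - xs y := by
    rw [norm_smul, Real.norm_of_nonneg hy1]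
    exact mul_le_of_le_one_right hy1 hx0
  have h4 : y - xs y • x0 = (y - x0) + (1 - xs y) • x0 := by module
  have h5 := norm_add_le (y - x0) ((1 - xs y) • x0)
  rw [← h4] at h5
  have h6 := Metric.dist_le_diam_of_mem hbdd (x := y) (y := x0)
    ⟨hy, by linarith⟩ ⟨hx0, by linarith⟩
  rw [dist_eq_norm] at h6
  linarith
end

section
/- Let X be a normed space with the Daugavet property. Then for every x in the unit sphere of X, every ε > 0, and every separable subspace V of the dual X*, there exists x* in the unit sphere of X* such that Re x*(x) ≥ 1 − ε and ‖x* + f‖ = 1 + ‖f‖ for all f ∈ V. -/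
/-- Slice-refinement lemma: every weak-star slice contains a weak-star slice on which
`‖g + f‖` is almost `1 + ‖f‖`. -/
theorem daugavet_slice_refine
    {X : Type*} [NormedAddCommGroup X] [NormedSpace ℝ X] (h : DaugavetProperty X)
    (x : X) (hx : ‖x‖ = 1) (δ : ℝ) (hδ : 0 < δ) (f : X →L[ℝ] ℝ) (η : ℝ) (hη : 0 < η) :
    ∃ (z : X) (r : ℝ), ‖z‖ = 1 ∧ 0 < r ∧ ∀ g : X →L[ℝ] ℝ, ‖g‖ ≤ 1 → 1 - r ≤ g z →
      1 - δ ≤ g x ∧ 1 + ‖f‖ - η ≤ ‖g + f‖ := by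
  have happ : ∀ (g : X →L[ℝ] ℝ) (y : X), ‖y‖ ≤ 1 → g y ≤ ‖g‖ := by
    intro g y hy
    have h1 := g.le_opNorm y
    have h2 : g y ≤ ‖g y‖ := le_abs_self _
    nlinarith [norm_nonneg g]
  by_cases hf : f = 0
  · subst hf
    refine ⟨x, min δ η, hx, lt_min hδ hη, ?_⟩
    intro g hg hgx
    have h1 := min_le_left δ η
    have h2 := min_le_right δ η
    have h3 := happ g x hx.le
    simp only [norm_zero, add_zero]
    constructor <;> linarith
  have hfp : 0 < ‖f‖ := norm_pos_iff.mpr hf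
  obtain ⟨η', hη'0, hη'1, hη'2, hη'3⟩ :
      ∃ a : ℝ, 0 < a ∧ a ≤ η ∧ a ≤ δ * ‖f‖ ∧ a ≤ ‖f‖ / 2 :=
    ⟨min η (min (δ * ‖f‖) (‖f‖ / 2)), by positivity, min_le_left _ _,
      (min_le_right _ _).trans (min_le_left _ _), (min_le_right _ _).trans (min_le_right _ _)⟩
  have hT := h f x
  rw [ContinuousLinearMap.norm_smulRight_apply, hx, mul_one] at hT
  -- choose an almost norming vector with nonnegative value
  obtain ⟨y, hy, hfy, hN⟩ : ∃ y : X, ‖y‖ ≤ 1 ∧ 0 ≤ f y ∧ 1 + ‖f‖ - η' / 2 < ‖y + f y • x‖ := by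
    have hlt : 1 + ‖f‖ - η' / 2 < ‖ContinuousLinearMap.id ℝ X + f.smulRight x‖ := by
      rw [hT]; linarith
    obtain ⟨y, hy, hyN⟩ := ContinuousLinearMap.exists_lt_apply_of_lt_opNorm _ hlt
    have hyN' : 1 + ‖f‖ - η' / 2 < ‖y + f y • x‖ := by simpa using hyN
    rcases le_total 0 (f y) with h0 | h0
    · exact ⟨y, hy.le, h0, hyN'⟩
    · refine ⟨-y, by simpa using hy.le, by simpa using h0, ?_⟩
      have : -y + f (-y) • x = -(y + f y • x) := by
        rw [map_neg, neg_smul]; abel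
      rwa [this, norm_neg]
  set w := y + f y • x with hw
  have hNpos : 0 < ‖w‖ := by linarith
  have hfy1 := happ f y hy
  have hNle : ‖w‖ ≤ 1 + ‖f‖ := by
    calc ‖w‖ ≤ ‖y‖ + ‖f y • x‖ := norm_add_le _ _
      _ ≤ 1 + ‖f‖ := by
        rw [norm_smul, hx, mul_one, Real.norm_eq_abs, abs_of_nonneg hfy]; linarith
  refine ⟨‖w‖⁻¹ • w, η' / (2 * (1 + ‖f‖)), ?_, by positivity, ?_⟩
  · rw [norm_smul, norm_inv, norm_norm, inv_mul_cancel₀ hNpos.ne']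
  intro g hg hgz
  rw [map_smul, smul_eq_mul] at hgz
  have hgw : (1 - η' / (2 * (1 + ‖f‖))) * ‖w‖ ≤ g w := by
    have := mul_le_mul_of_nonneg_right hgz hNpos.le
    rwa [mul_comm ‖w‖⁻¹, mul_assoc, inv_mul_cancel₀ hNpos.ne', mul_one] at this
  have hr : η' / (2 * (1 + ‖f‖)) * ‖w‖ ≤ η' / 2 := by
    calc η' / (2 * (1 + ‖f‖)) * ‖w‖ ≤ η' / (2 * (1 + ‖f‖)) * (1 + ‖f‖) := by gcongr
      _ = η' / 2 := by field_simp
  have hgw2 : g w = g y + f y * g x := by simp [hw]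
  have hkey : 1 + ‖f‖ - η' ≤ g y + f y * g x := by
    rw [← hgw2]; linarith
  have hgy := (happ g y hy).trans hg
  have hgx := (happ g x hx.le).trans hg
  have hpos : 0 < g x := by
    by_contra hcon
    push Not at hcon
    nlinarith
  constructor
  · have h1 : f y * g x ≤ ‖f‖ * g x := by gcongr
    have h2 : ‖f‖ * (1 - δ) ≤ ‖f‖ * g x := by nlinarith
    exact le_of_mul_le_mul_left h2 hfp
  · have h1 := happ (g + f) y hy
    have h2 : (g + f) y = g y + f y := rfl
    nlinarith

/-- In a normed space with the Daugavet property, for every point of the unit sphere,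
every `ε > 0` and every separable subspace `V` of the dual, there is a norm-one
functional almost attaining its norm at the point and codirected with every `f ∈ V`. -/
theorem daugavet_codirected_functional_separable
    (X : Type*) [NormedAddCommGroup X] [NormedSpace ℝ X] (h : DaugavetProperty X)
    (x : X) (hx : ‖x‖ = 1) (ε : ℝ) (hε : 0 < ε)
    (V : Submodule ℝ (X →L[ℝ] ℝ))
    (hV : TopologicalSpace.IsSeparable (V : Set (X →L[ℝ] ℝ))) :
    ∃ xs : X →L[ℝ] ℝ, ‖xs‖ = 1 ∧ xs x ≥ 1 - ε ∧ ∀ f ∈ V, ‖xs + f‖ = 1 + ‖f‖ := by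
  obtain ⟨c, hc, hVc⟩ := hV
  have hcne : c.Nonempty := closure_nonempty_iff.mp ⟨0, hVc V.zero_mem⟩
  obtain ⟨u, rfl⟩ := hc.exists_eq_range hcne
  have step : ∀ (n : ℕ) (p : {p : X × ℝ // ‖p.1‖ = 1 ∧ 0 < p.2}),
      ∃ q : {p : X × ℝ // ‖p.1‖ = 1 ∧ 0 < p.2}, ∀ g : X →L[ℝ] ℝ, ‖g‖ ≤ 1 →
        1 - q.1.2 ≤ g q.1.1 → 1 - p.1.2 ≤ g p.1.1 ∧
        1 + ‖u n.unpair.1‖ - 1 / ((n : ℝ) + 1) ≤ ‖g + u n.unpair.1‖ := by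
    rintro n ⟨⟨a, r⟩, ha, hr⟩
    obtain ⟨z, s, hz, hs, H⟩ := daugavet_slice_refine h a ha r hr (u n.unpair.1)
      (1 / ((n : ℝ) + 1)) (by positivity)
    exact ⟨⟨⟨z, s⟩, hz, hs⟩, H⟩
  choose F hF using step
  let p : ℕ → {p : X × ℝ // ‖p.1‖ = 1 ∧ 0 < p.2} :=
    fun n => Nat.rec ⟨(x, ε), hx, hε⟩ (fun n q => F n q) n
  have hp : ∀ n, p (n + 1) = F n (p n) := fun n => rfl
  let K : ℕ → Set (WeakDual ℝ X) := fun n =>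
    (WeakDual.toStrongDual ⁻¹' Metric.closedBall (0 : StrongDual ℝ X) 1) ∩
      {g | 1 - (p n).1.2 ≤ g (p n).1.1}
  have hcomp : IsCompact
      (WeakDual.toStrongDual ⁻¹' Metric.closedBall (0 : StrongDual ℝ X) 1) :=
    WeakDual.isCompact_closedBall 0 1
  have hcl : ∀ n, IsClosed (K n) := fun n =>
    hcomp.isClosed.inter (isClosed_le continuous_const (WeakDual.eval_continuous _))
  obtain ⟨g, hg⟩ : (⋂ n, K n).Nonempty := by
    apply IsCompact.nonempty_iInter_of_sequence_nonempty_isCompact_isClosed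
    · rintro n g ⟨hg1, hg2⟩
      refine ⟨hg1, ?_⟩
      have hg1' : ‖WeakDual.toStrongDual g‖ ≤ 1 := by simpa using hg1
      exact (hF n (p n) (WeakDual.toStrongDual g) hg1' hg2).1
    · intro n
      obtain ⟨g, hg1, hg2⟩ := exists_dual_vector ℝ (p n).1.1
        (by rw [← norm_ne_zero_iff, (p n).2.1]; norm_num)
      refine ⟨StrongDual.toWeakDual g, ?_, ?_⟩
      · simpa using hg1.le
      · have h1 : g (p n).1.1 = 1 := by rw [hg2, (p n).2.1]; rfl
        have h2 := (p n).2.2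
        change 1 - (p n).1.2 ≤ g (p n).1.1
        linarith
    · exact hcomp.inter_right (isClosed_le continuous_const (WeakDual.eval_continuous _))
    · exact hcl
  rw [Set.mem_iInter] at hg
  set G : X →L[ℝ] ℝ := WeakDual.toStrongDual g with hG
  have hG1 : ‖G‖ ≤ 1 := by simpa using (hg 0).1
  have hGu : ∀ n : ℕ, ‖G + u n.unpair.1‖ ≥ 1 + ‖u n.unpair.1‖ - 1 / ((n : ℝ) + 1) := fun n =>
    (hF n (p n) G hG1 (hg (n + 1)).2).2
  have hGc : ∀ k, 1 + ‖u k‖ ≤ ‖G + u k‖ := by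
    intro k
    apply le_of_forall_pos_le_add
    intro e he
    obtain ⟨m, hm⟩ := exists_nat_one_div_lt he
    have h1 := hGu (Nat.pair k m)
    rw [Nat.unpair_pair] at h1
    have h2 : 1 / ((Nat.pair k m : ℝ) + 1) ≤ 1 / ((m : ℝ) + 1) := by
      have : (m : ℝ) ≤ (Nat.pair k m : ℝ) := by exact_mod_cast Nat.right_le_pair k m
      gcongr
    simp only at h1
    linarith
  have hclosed : IsClosed {f : X →L[ℝ] ℝ | 1 + ‖f‖ ≤ ‖G + f‖} :=
    isClosed_le (by fun_prop) (by fun_prop)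
  have hall : ∀ f ∈ V, 1 + ‖f‖ ≤ ‖G + f‖ := fun f hf =>
    closure_minimal (by rintro _ ⟨k, rfl⟩; exact hGc k) hclosed (hVc hf)
  refine ⟨G, le_antisymm hG1 ?_, (hg 0).2, fun f hf => le_antisymm ?_ (hall f hf)⟩
  · simpa using hall 0 V.zero_mem
  · exact (norm_add_le _ _).trans (by linarith)
end

section
/- If X is a normed space with the Daugavet property, then the dual norm of X* is not Gâteaux differentiable at any nonzero point; that is, X* has no smooth points. -/
open Filter Topology

/-- A nonzero point `y` of a normed space is a smooth point (the norm is Gâteaux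
differentiable at `y`) if `(‖y + t h‖ + ‖y - t h‖ - 2‖y‖)/t → 0` as `t → 0`,
for every `h` in the unit sphere. -/
def SmoothPoint (Y : Type*) [SeminormedAddCommGroup Y] [NormedSpace ℝ Y] (y : Y) : Prop :=
  ∀ h : Y, ‖h‖ = 1 →
    Tendsto (fun t : ℝ => (‖y + t • h‖ + ‖y - t • h‖ - 2 * ‖y‖) / t) (𝓝[≠] (0 : ℝ)) (𝓝 0)

theorem daug_step {X : Type*} [NormedAddCommGroup X] [NormedSpace ℝ X] (h : DaugavetProperty X)
    (f : X →L[ℝ] ℝ) (hf : ‖f‖ = 1) (x : X) (hx : x ≠ 0) (δ : ℝ) (hδ : 0 < δ) :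
    ∃ y : X, ‖y‖ ≤ 1 ∧ 1 - δ ≤ f y ∧ ‖x‖ + 1 - δ ≤ ‖x + y‖ := by
  have hxp : 0 < ‖x‖ := norm_pos_iff.mpr hx
  obtain ⟨d, hd0, hd1, hd2⟩ : ∃ d : ℝ, 0 < d ∧ d ≤ δ * ‖x‖ ∧ d ≤ δ / 2 :=
    ⟨min (δ * ‖x‖) (δ / 2), lt_min (by positivity) (by positivity), min_le_left _ _,
      min_le_right _ _⟩
  have hn := h f x
  rw [ContinuousLinearMap.norm_smulRight_apply, hf, one_mul] at hn
  have key : ∃ y : X, ‖y‖ ≤ 1 ∧ 1 + ‖x‖ - d < ‖y + f y • x‖ := by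
    obtain ⟨y, hy1, hy2⟩ := ContinuousLinearMap.exists_lt_apply_of_lt_opNorm
      (ContinuousLinearMap.id ℝ X + f.smulRight x) (r := 1 + ‖x‖ - d) (by rw [hn]; linarith)
    exact ⟨y, hy1.le, by simpa using hy2⟩
  have key2 : ∃ y : X, ‖y‖ ≤ 1 ∧ 1 + ‖x‖ - d < ‖y + f y • x‖ ∧ 0 ≤ f y := by
    obtain ⟨y, hy1, hy2⟩ := key
    rcases le_total 0 (f y) with h0 | h0
    · exact ⟨y, hy1, hy2, h0⟩
    · refine ⟨-y, by simpa using hy1, ?_, by simpa using h0⟩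
      have : -y + f (-y) • x = -(y + f y • x) := by simp; abel
      rw [this, norm_neg]; exact hy2
  obtain ⟨y, hy1, hy2, hy3⟩ := key2
  have hfy : f y ≤ 1 := by
    have := f.le_opNorm y
    rw [hf, one_mul] at this
    exact (le_abs_self _).trans (this.trans hy1)
  have h1 : ‖y + f y • x‖ ≤ ‖y‖ + f y * ‖x‖ := by
    refine (norm_add_le _ _).trans ?_
    rw [norm_smul, Real.norm_of_nonneg hy3]
  have h2 : ‖y + f y • x‖ ≤ ‖x + y‖ + (1 - f y) * ‖x‖ := by
    have e : y + f y • x = (x + y) - (1 - f y) • x := by module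
    rw [e]
    refine (norm_sub_le _ _).trans ?_
    rw [norm_smul, Real.norm_of_nonneg (by linarith)]
  have h3 : (1 - f y) * ‖x‖ ≤ d := by nlinarith
  refine ⟨y, hy1, ?_, by linarith⟩
  have : (1 - f y) * ‖x‖ ≤ δ * ‖x‖ := h3.trans hd1
  have := le_of_mul_le_mul_right this hxp
  linarith

theorem daug_slice {X : Type*} [NormedAddCommGroup X] [NormedSpace ℝ X] (h : DaugavetProperty X)
    (f : X →L[ℝ] ℝ) (hf : ‖f‖ = 1) (x : X) (hx : x ≠ 0) (η : ℝ) (hη : 0 < η) :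
    ∃ x' : X, x' ≠ 0 ∧ ∀ g : X →L[ℝ] ℝ, ‖g‖ ≤ 1 → ‖x'‖ - η / 2 ≤ g x' →
      ‖x‖ - η ≤ g x ∧ 2 - 2 * η ≤ ‖f + g‖ := by
  have hxp : 0 < ‖x‖ := norm_pos_iff.mpr hx
  obtain ⟨y, hy1, hy2, hy3⟩ := daug_step h f hf x hx (min (η / 2) 1) (by positivity)
  have m1 := min_le_left (η / 2) 1
  have m2 := min_le_right (η / 2) 1
  refine ⟨x + y, ?_, ?_⟩
  · rw [← norm_pos_iff]; linarith
  · intro g hg hgx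
    rw [map_add] at hgx
    have b : ∀ z, g z ≤ ‖z‖ := fun z => (le_abs_self _).trans
      ((g.le_opNorm z).trans (mul_le_of_le_one_left (norm_nonneg _) hg))
    have b1 := b x
    have b2 := b y
    refine ⟨by linarith, ?_⟩
    have c : (f + g) y ≤ ‖f + g‖ := (le_abs_self _).trans
      (((f + g).le_opNorm y).trans (mul_le_of_le_one_right (norm_nonneg _) hy1))
    rw [add_apply] at c
    linarith

theorem daug_slice2 {X : Type*} [NormedAddCommGroup X] [NormedSpace ℝ X] (h : DaugavetProperty X)
    (f : X →L[ℝ] ℝ) (hf : ‖f‖ = 1) (η : ℝ) (hη : 0 < η) (x : {x : X // x ≠ 0}) :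
    ∃ x' : {x : X // x ≠ 0}, ∀ g : X →L[ℝ] ℝ, ‖g‖ ≤ 1 → ‖x'.1‖ - η / 4 ≤ g x'.1 →
      ‖x.1‖ - η ≤ g x.1 ∧ 2 - 2 * η ≤ ‖f + g‖ ∧ 2 - 2 * η ≤ ‖f - g‖ := by
  obtain ⟨x1, h1, H1⟩ := daug_slice h f hf x.1 x.2 η hη
  obtain ⟨x2, h2, H2⟩ := daug_slice h (-f) (by simpa using hf) x1 h1 (η / 2) (by positivity)
  refine ⟨⟨x2, h2⟩, fun g hg hgx => ?_⟩
  obtain ⟨A, B⟩ := H2 g hg (by simp only at hgx; linarith)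
  obtain ⟨C, D⟩ := H1 g hg A
  refine ⟨C, D, ?_⟩
  have : ‖-f + g‖ = ‖f - g‖ := by rw [← norm_neg]; congr 1; abel
  rw [← this]; linarith

theorem daug_exists {X : Type*} [NormedAddCommGroup X] [NormedSpace ℝ X] (h : DaugavetProperty X)
    (f : X →L[ℝ] ℝ) (hf : ‖f‖ = 1) :
    ∃ g : X →L[ℝ] ℝ, ‖g‖ ≤ 1 ∧ 2 ≤ ‖f + g‖ ∧ 2 ≤ ‖f - g‖ := by
  have hne : ∃ x : X, x ≠ 0 := by
    by_contra! hc
    have : f = 0 := by ext x; simp [hc x]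
    simp [this] at hf
  obtain ⟨x0, hx0⟩ := hne
  let η : ℕ → ℝ := fun n => (1 / 4) ^ n
  have hη : ∀ n, 0 < η n := fun n => by positivity
  have hη' : ∀ n, η (n + 1) = η n / 4 := fun n => by simp only [η, pow_succ]; ring
  choose F hF using fun n => daug_slice2 h f hf (η n) (hη n)
  let u : ℕ → {x : X // x ≠ 0} := fun n => Nat.rec ⟨x0, hx0⟩ (fun n x => F n x) n
  have hu : ∀ n, u (n + 1) = F n (u n) := fun n => rfl
  let B : Set (WeakDual ℝ X) := {g | WeakDual.toStrongDual g ∈ Metric.closedBall 0 1}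
  have hB : IsCompact B := WeakDual.isCompact_closedBall 0 1
  let K : ℕ → Set (WeakDual ℝ X) := fun n => B ∩ {g | ‖(u n).1‖ - η n ≤ g (u n).1}
  have hcl : ∀ n, IsClosed {g : WeakDual ℝ X | ‖(u n).1‖ - η n ≤ g (u n).1} := fun n =>
    isClosed_le continuous_const (WeakDual.eval_continuous _)
  have hstep : ∀ n, ∀ g : X →L[ℝ] ℝ, ‖g‖ ≤ 1 → ‖(u (n+1)).1‖ - η (n+1) ≤ g (u (n+1)).1 →
      ‖(u n).1‖ - η n ≤ g (u n).1 ∧ 2 - 2 * η n ≤ ‖f + g‖ ∧ 2 - 2 * η n ≤ ‖f - g‖ := by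
    intro n g hg hgx
    rw [hη', hu] at hgx
    exact hF n (u n) g hg hgx
  have hmem : ∀ g : WeakDual ℝ X, g ∈ B ↔ ‖WeakDual.toStrongDual g‖ ≤ 1 := by
    intro g; simp [B]
  obtain ⟨g, hg⟩ := IsCompact.nonempty_iInter_of_sequence_nonempty_isCompact_isClosed K
    (fun n g hg => ⟨hg.1, (hstep n (WeakDual.toStrongDual g) ((hmem g).1 hg.1) hg.2).1⟩)
    (fun n => by
      obtain ⟨g, hg1, hg2⟩ := exists_dual_vector ℝ (u n).1 (norm_ne_zero_iff.mpr (u n).2)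
      refine ⟨StrongDual.toWeakDual g, (hmem _).2 ?_, ?_⟩
      · exact hg1.le
      · change ‖(u n).1‖ - η n ≤ g (u n).1
        rw [hg2]
        have := hη n
        simp only [RCLike.ofReal_real_eq_id, id]
        linarith)
    (hB.inter_right (hcl 0))
    (fun n => hB.isClosed.inter (hcl n))
  rw [Set.mem_iInter] at hg
  have hg1 := (hmem g).1 (hg 0).1
  have hs := fun n => (hstep n (WeakDual.toStrongDual g) hg1 (hg (n+1)).2).2
  have hlim : Tendsto (fun n => 2 - 2 * η n) atTop (𝓝 2) := by
    have : Tendsto η atTop (𝓝 0) := tendsto_pow_atTop_nhds_zero_of_lt_one (by norm_num) (by norm_num)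
    simpa using (this.const_mul 2).const_sub 2
  exact ⟨WeakDual.toStrongDual g, hg1, le_of_tendsto' hlim fun n => (hs n).1,
    le_of_tendsto' hlim fun n => (hs n).2⟩

/-- If `X` is a normed space with the Daugavet property, then the dual norm of `X*`
is not Gâteaux differentiable at any nonzero point. -/
theorem daugavet_dual_no_smooth_points
    (X : Type*) [NormedAddCommGroup X] [NormedSpace ℝ X] (h : DaugavetProperty X)
    (v : X →L[ℝ] ℝ) (hv : v ≠ 0) : ¬ SmoothPoint (X →L[ℝ] ℝ) v := by
  intro hs
  have hc : 0 < ‖v‖ := norm_pos_iff.mpr hv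
  have hf : ‖‖v‖⁻¹ • v‖ = 1 := by
    rw [norm_smul, norm_inv, norm_norm, inv_mul_cancel₀ hc.ne']
  obtain ⟨g, hg, h1, h2⟩ := daug_exists h (‖v‖⁻¹ • v) hf
  have hg1 : ‖g‖ = 1 := by
    have := norm_add_le (‖v‖⁻¹ • v) g
    linarith
  have bound : ∀ k : X →L[ℝ] ℝ, ‖k‖ = 1 → 2 ≤ ‖‖v‖⁻¹ • v + k‖ → ∀ t, 0 < t → t ≤ ‖v‖ →
      ‖v‖ + t ≤ ‖v + t • k‖ := by
    intro k hk hk2 t ht htv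
    have e : ‖v‖ • (‖v‖⁻¹ • v + k) = (v + t • k) + (‖v‖ - t) • k := by
      rw [smul_add, smul_smul, mul_inv_cancel₀ hc.ne']; module
    have e2 := norm_add_le (v + t • k) ((‖v‖ - t) • k)
    rw [← e, norm_smul, norm_smul, hk, norm_norm, Real.norm_of_nonneg (by linarith)] at e2
    nlinarith
  have hT := (hs g hg1).mono_left (nhdsWithin_mono (0 : ℝ) (fun t (ht : t ∈ Set.Ioi (0:ℝ)) => ne_of_gt ht))
  have h20 : (2 : ℝ) ≤ 0 := by
    refine ge_of_tendsto hT ?_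
    filter_upwards [Ioc_mem_nhdsGT hc] with t ht
    have b1 := bound g hg1 h1 t ht.1 ht.2
    have b2 := bound (-g) (by simpa using hg1) (by simpa [← sub_eq_add_neg] using h2) t ht.1 ht.2
    rw [smul_neg, ← sub_eq_add_neg] at b2
    rw [le_div_iff₀ ht.1]
    linarith
  norm_num at h20
end

section
/- There exists a linear subspace X of L¹[0,1] that is not closed in L¹[0,1], such that X (with the induced norm) has the Daugavet property, and the norm of X is Gâteaux differentiable at every nonzero point of X (i.e., X consists entirely of smooth points). -/
open MeasureTheory Filter Topology

/-- Lebesgue measure restricted to `[0,1]`. -/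
noncomputable def mu01 : Measure ℝ := volume.restrict (Set.Icc 0 1)

instance : IsFiniteMeasure mu01 := by unfold mu01; infer_instance

/-- The space of polynomial functions on `[0,1]`. -/
def polyX : Submodule ℝ (Lp ℝ 1 mu01) where
  carrier := {u | ∃ p : Polynomial ℝ, u =ᵐ[mu01] fun t => p.eval t}
  zero_mem' := ⟨0, by
    filter_upwards [Lp.coeFn_zero ℝ 1 mu01] with t ht
    rw [ht]; simp⟩
  add_mem' := by
    rintro a b ⟨p, hp⟩ ⟨q, hq⟩
    refine ⟨p + q, ?_⟩
    filter_upwards [Lp.coeFn_add a b, hp, hq] with t h1 h2 h3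
    rw [h1, Pi.add_apply, h2, h3, Polynomial.eval_add]
  smul_mem' := by
    rintro c a ⟨p, hp⟩
    refine ⟨Polynomial.C c * p, ?_⟩
    filter_upwards [Lp.coeFn_smul c a, hp] with t h1 h2
    rw [h1, Pi.smul_apply, h2]; simp

lemma mem_polyX {u : Lp ℝ 1 mu01} :
    u ∈ polyX ↔ ∃ p : Polynomial ℝ, u =ᵐ[mu01] fun t => p.eval t := Iff.rfl

lemma poly_memLp (p : Polynomial ℝ) : MemLp (fun t => p.eval t) 1 mu01 := by
  rw [memLp_one_iff_integrable]
  unfold mu01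
  exact (p.continuous.continuousOn).integrableOn_compact isCompact_Icc

lemma poly_ae_ne {p : Polynomial ℝ} (hp : p ≠ 0) : ∀ᵐ t ∂mu01, p.eval t ≠ 0 := by
  have h : {t : ℝ | p.eval t = 0}.Finite := by
    refine (p.roots.toFinset.finite_toSet).subset ?_
    intro t ht
    simp only [Finset.mem_coe, Multiset.mem_toFinset]
    exact (Polynomial.mem_roots hp).2 ht
  have h2 : mu01 {t : ℝ | p.eval t = 0} = 0 := by
    unfold mu01
    exact h.measure_zero _
  rw [ae_iff]
  simpa using h2

lemma polyX_dense : Dense (polyX : Set (Lp ℝ 1 mu01)) := by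
  rw [Metric.dense_iff]
  intro u r hr
  obtain ⟨g, hg, hgm⟩ := (Lp.memLp u).exists_boundedContinuous_eLpNorm_sub_le
    ENNReal.one_ne_top (ε := ENNReal.ofReal (r/3)) (by simpa using hr)
  obtain ⟨p, hp⟩ := exists_polynomial_near_of_continuousOn 0 1 g g.continuous.continuousOn (r/3)
    (by positivity)
  refine ⟨(poly_memLp p).toLp, ?_, ⟨p, MemLp.coeFn_toLp _⟩⟩
  have e1 : dist (hgm.toLp g) u ≤ r/3 := by
    rw [dist_comm, Lp.dist_def]
    refine ENNReal.toReal_le_of_le_ofReal (by positivity) ?_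
    refine le_trans (le_of_eq (eLpNorm_congr_ae ?_)) hg
    filter_upwards [hgm.coeFn_toLp] with t ht
    simp [ht]
  have e2 : dist ((poly_memLp p).toLp) (hgm.toLp g) ≤ r/3 := by
    rw [Lp.dist_def]
    refine ENNReal.toReal_le_of_le_ofReal (by positivity) ?_
    refine le_trans (eLpNorm_le_of_ae_bound (C := r/3) ?_) ?_
    · have : ∀ᵐ t ∂mu01, t ∈ Set.Icc (0:ℝ) 1 := by
        unfold mu01
        exact ae_restrict_mem measurableSet_Icc
      filter_upwards [hgm.coeFn_toLp, (poly_memLp p).coeFn_toLp, this] with t h1 h2 h3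
      rw [Pi.sub_apply, h1, h2]
      exact (hp t h3).le
    · simp [mu01]
  rw [Metric.mem_ball]
  linarith [dist_triangle ((poly_memLp p).toLp) (hgm.toLp g) u]

lemma norm_eq_int (u : Lp ℝ 1 mu01) : ‖u‖ = ∫ t, |u t| ∂mu01 := by
  rw [L1.norm_eq_integral_norm]; rfl

lemma polyX_not_closed : ¬ IsClosed (polyX : Set (Lp ℝ 1 mu01)) := by
  intro hc
  have hall : ∀ u, u ∈ polyX := fun u => by
    have := polyX_dense u
    rwa [hc.closure_eq] at this
  have hm : MemLp (Set.indicator (Set.Icc 0 (1/2:ℝ)) (fun _ => (1:ℝ))) 1 mu01 :=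
    (memLp_const 1).indicator measurableSet_Icc
  obtain ⟨p, hp⟩ := hall hm.toLp
  have h1 : ∀ᵐ t ∂mu01, Set.indicator (Set.Icc 0 (1/2:ℝ)) (fun _ => (1:ℝ)) t = p.eval t := by
    filter_upwards [hp, hm.coeFn_toLp] with t a b
    rw [← a, b]
  by_cases h0 : p = 0
  · have : mu01 (Set.Icc 0 (1/2)) = 0 := by
      refine measure_mono_null ?_ (ae_iff.1 h1)
      intro t ht
      simp only [Set.mem_ofPred_eq, h0, Polynomial.eval_zero]
      rw [Set.indicator_of_mem ht]
      exact one_ne_zero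
    rw [mu01, Measure.restrict_apply measurableSet_Icc, Set.inter_eq_left.2
      (Set.Icc_subset_Icc le_rfl (by norm_num)), Real.volume_Icc] at this
    norm_num at this
  · have : mu01 (Set.Ioc (1/2) 1) = 0 := by
      have h2 : ∀ᵐ t ∂mu01, Set.indicator (Set.Icc 0 (1/2:ℝ)) (fun _ => (1:ℝ)) t ≠ 0 := by
        filter_upwards [h1, poly_ae_ne h0] with t a b
        rwa [a]
      refine measure_mono_null ?_ (ae_iff.1 h2)
      intro t ht
      have : t ∉ Set.Icc 0 (1/2:ℝ) := fun h => absurd h.2 (not_le.2 ht.1)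
      simp only [Set.mem_ofPred_eq, not_not]
      exact Set.indicator_of_notMem this _
    have hss : Set.Ioc (1/2:ℝ) 1 ⊆ Set.Icc 0 1 := fun t ht => ⟨by linarith [ht.1], ht.2⟩
    rw [mu01, Measure.restrict_apply measurableSet_Ioc, Set.inter_eq_left.2 hss,
      Real.volume_Ioc] at this
    norm_num at this

lemma abs_aux (a b : ℝ) : |(|a + b| + |a - b| - 2 * |a|)| ≤ 2 * |b| := by
  rw [abs_le]
  constructor
  · have := abs_add_le (a + b) (a - b)
    have h : |a + b + (a - b)| = 2 * |a| := by
      rw [show a + b + (a - b) = 2 * a by ring, abs_mul]; norm_num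
    linarith [abs_nonneg b]
  · linarith [abs_add_le a b, abs_sub a b]

lemma abs_aux2 (a b : ℝ) (h : |b| ≤ |a|) : |a + b| + |a - b| - 2 * |a| = 0 := by
  grind

lemma smooth_aux (u v : Lp ℝ 1 mu01) (hu : ∀ᵐ t ∂mu01, u t ≠ 0) :
    Tendsto (fun s : ℝ => (‖u + s • v‖ + ‖u - s • v‖ - 2 * ‖u‖) / s) (𝓝[≠] (0 : ℝ)) (𝓝 0) := by
  have hI : ∀ w : Lp ℝ 1 mu01, Integrable (fun t => |w t|) mu01 :=
    fun w => (L1.integrable_coeFn w).abs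
  have key : ∀ s : ℝ, (‖u + s • v‖ + ‖u - s • v‖ - 2 * ‖u‖) / s =
      ∫ t, (|u t + s * v t| + |u t - s * v t| - 2 * |u t|) / s ∂mu01 := by
    intro s
    rw [norm_eq_int, norm_eq_int, norm_eq_int, ← integral_const_mul, ← integral_add (hI _) (hI _),
      ← integral_sub (by exact (hI _).add (hI _)) ((hI _).const_mul 2), ← integral_div]
    apply integral_congr_ae
    filter_upwards [Lp.coeFn_add u (s • v), Lp.coeFn_sub u (s • v), Lp.coeFn_smul s v]
      with t h1 h2 h3
    simp only [h1, h2, h3, Pi.add_apply, Pi.sub_apply, Pi.smul_apply, smul_eq_mul]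
  simp_rw [key]
  have hz : (0:ℝ) = ∫ t, (0:ℝ) ∂mu01 := by simp
  conv => arg 3; rw [hz]
  have hum := (L1.integrable_coeFn u).aestronglyMeasurable
  have hvm := (L1.integrable_coeFn v).aestronglyMeasurable
  refine tendsto_integral_filter_of_dominated_convergence (fun t => 2 * |v t|) ?_ ?_
    ((hI v).const_mul 2) ?_
  · refine Eventually.of_forall fun s => ?_
    have hu' := hum.aemeasurable
    have hv' := hvm.aemeasurable
    apply AEMeasurable.aestronglyMeasurable
    have e1 : AEMeasurable (fun t => |u t + s * v t|) mu01 := by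
      exact (hu'.add (hv'.const_mul s)).norm
    have e2 : AEMeasurable (fun t => |u t - s * v t|) mu01 := by
      exact (hu'.sub (hv'.const_mul s)).norm
    have e3 : AEMeasurable (fun t => |u t|) mu01 := by
      simpa only [Real.norm_eq_abs] using hu'.norm
    exact ((e1.add e2).sub (e3.const_mul 2)).div_const s
  · filter_upwards [self_mem_nhdsWithin] with s hs
    refine Eventually.of_forall fun t => ?_
    have hs : 0 < |s| := abs_pos.2 hs
    rw [Real.norm_eq_abs, abs_div, div_le_iff₀ hs]
    refine (abs_aux _ _).trans (le_of_eq ?_)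
    rw [abs_mul]; ring
  · filter_upwards [hu] with t ht
    have : Tendsto (fun s : ℝ => |s * v t|) (𝓝[≠] 0) (𝓝 0) := by
      have : Continuous (fun s : ℝ => |s * v t|) := by fun_prop
      have h := this.tendsto 0
      simp only [zero_mul, abs_zero] at h
      exact h.mono_left nhdsWithin_le_nhds
    refine tendsto_const_nhds.congr' ?_
    filter_upwards [this.eventually (gt_mem_nhds (abs_pos.2 ht))] with s hs
    rw [abs_aux2 _ _ hs.le, zero_div]

/-- Level sets used as a partition. -/
def cell (n i : ℕ) : Set ℝ := Set.Ico ((i:ℝ)/n) ((i+1:ℝ)/n)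

lemma cell_meas (n i : ℕ) : MeasurableSet (cell n i) := measurableSet_Ico

lemma cell_measure (n i : ℕ) : mu01.real (cell n i) ≤ 1 / n := by
  have h : mu01 (cell n i) ≤ ENNReal.ofReal (1 / n) := by
    refine (Measure.restrict_apply_le _ _).trans (le_of_eq ?_)
    rw [cell, Real.volume_Ico]
    congr 1
    ring
  exact ENNReal.toReal_le_of_le_ofReal (by positivity) h

lemma cell_sum (n : ℕ) (hn : 0 < n) (g : ℝ → ℝ) (t : ℝ) (ht : t ∈ Set.Icc (0:ℝ) 1) :
    ∑ i ∈ Finset.range (n+1), (cell n i).indicator g t = g t := by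
  have hn' : (0:ℝ) < n := by exact_mod_cast hn
  have hmem : ∀ i : ℕ, t ∈ cell n i ↔ ⌊n * t⌋₊ = i := by
    intro i
    rw [Nat.floor_eq_iff (mul_nonneg hn'.le ht.1), cell, Set.mem_Ico, div_le_iff₀ hn',
      lt_div_iff₀ hn', mul_comm t]
  classical
  have hind : ∀ i : ℕ, (cell n i).indicator g t = if ⌊n * t⌋₊ = i then g t else 0 := by
    intro i
    by_cases h : t ∈ cell n i
    · rw [Set.indicator_of_mem h, if_pos ((hmem i).1 h)]
    · rw [Set.indicator_of_notMem h, if_neg (fun h' => h ((hmem i).2 h'))]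
  simp_rw [hind]
  rw [Finset.sum_ite_eq, if_pos]
  rw [Finset.mem_range, Nat.lt_succ_iff]
  apply Nat.floor_le_of_le
  nlinarith [ht.2]

lemma ind_memLp (A : Set ℝ) (hA : MeasurableSet A) (y : Lp ℝ 1 mu01) :
    MemLp (A.indicator y) 1 mu01 := (Lp.memLp y).indicator hA

/-- Restriction of `y` to a cell. -/
noncomputable def piece (n i : ℕ) (y : Lp ℝ 1 mu01) : Lp ℝ 1 mu01 :=
  (ind_memLp (cell n i) (cell_meas n i) y).toLp

lemma piece_ae (n i : ℕ) (y : Lp ℝ 1 mu01) : piece n i y =ᵐ[mu01] (cell n i).indicator y :=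
  MemLp.coeFn_toLp _

lemma ae_mem : ∀ᵐ t ∂mu01, t ∈ Set.Icc (0:ℝ) 1 := by
  unfold mu01
  exact ae_restrict_mem measurableSet_Icc

lemma piece_norm (n : ℕ) (hn : 0 < n) (y : Lp ℝ 1 mu01) :
    ∑ i ∈ Finset.range (n+1), ‖piece n i y‖ = ‖y‖ := by
  simp_rw [norm_eq_int]
  rw [← integral_finsetSum _ (fun i _ => (L1.integrable_coeFn (piece n i y)).abs)]
  apply integral_congr_ae
  filter_upwards [ae_all_iff.2 (fun i => piece_ae n i y), ae_mem] with t h1 h2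
  simp only [h1]
  rw [← cell_sum n hn (fun t => |y t|) t h2]
  refine Finset.sum_congr rfl fun i _ => ?_
  by_cases h : t ∈ cell n i <;> simp [h]

lemma piece_sum (n : ℕ) (hn : 0 < n) (y : Lp ℝ 1 mu01) :
    ∑ i ∈ Finset.range (n+1), piece n i y = y := by
  apply Lp.ext
  filter_upwards [ae_all_iff.2 (fun i => piece_ae n i y), ae_mem,
    Lp.coeFn_finsetSum (Finset.range (n+1)) (fun i => piece n i y)] with t h1 h2 h3
  rw [h3, Finset.sum_apply]
  simp only [h1]
  exact cell_sum n hn y t h2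

lemma piece_lower (n i : ℕ) (y x : Lp ℝ 1 mu01) (M c : ℝ) (hM : 0 ≤ M)
    (hx : ∀ᵐ t ∂mu01, |x t| ≤ M) :
    ‖piece n i y‖ + |c| * ‖x‖ - 2 * |c| * M / n ≤ ‖piece n i y + c • x‖ := by
  have hI : ∀ w : Lp ℝ 1 mu01, Integrable (fun t => |w t|) mu01 :=
    fun w => (L1.integrable_coeFn w).abs
  have hJ : Integrable ((cell n i).indicator (fun _ => 2 * |c| * M)) mu01 :=
    (integrable_const _).indicator (cell_meas n i)
  have h1 : ‖piece n i y‖ + |c| * ‖x‖ ≤ ‖piece n i y + c • x‖ +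
      ∫ t, (cell n i).indicator (fun _ => 2 * |c| * M) t ∂mu01 := by
    rw [norm_eq_int, norm_eq_int, norm_eq_int, ← integral_const_mul,
      ← integral_add (hI _) ((hI _).const_mul _), ← integral_add (hI _) hJ]
    refine integral_mono_ae ((hI _).add ((hI _).const_mul _)) ((hI _).add hJ) ?_
    filter_upwards [piece_ae n i y, Lp.coeFn_add (piece n i y) (c • x), Lp.coeFn_smul c x, hx]
      with t a b d e
    simp only [b, d, a, Pi.add_apply, Pi.smul_apply, smul_eq_mul]
    by_cases h : t ∈ cell n i
    · simp only [Set.indicator_of_mem h]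
      have h5 : |y t| ≤ |y t + c * x t| + |c * x t| := by
        have := abs_sub (y t + c * x t) (c * x t)
        simpa using this
      rw [abs_mul] at h5
      have := mul_le_mul_of_nonneg_left e (abs_nonneg c)
      linarith
    · simp [Set.indicator_of_notMem h, abs_mul]
  have h2 : ∫ t, (cell n i).indicator (fun _ => 2 * |c| * M) t ∂mu01 ≤ 2 * |c| * M / n := by
    rw [integral_indicator_const _ (cell_meas n i), smul_eq_mul, mul_comm, div_eq_mul_one_div]
    exact mul_le_mul_of_nonneg_left (cell_measure n i) (by positivity)
  linarith

lemma daugavet_L1 (F : Lp ℝ 1 mu01 →L[ℝ] ℝ) (x : Lp ℝ 1 mu01) (M C : ℝ) (hM : 0 ≤ M)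
    (hx : ∀ᵐ t ∂mu01, |x t| ≤ M) (hC : ∀ z, ‖z + F z • x‖ ≤ C * ‖z‖) (y : Lp ℝ 1 mu01) :
    ‖y‖ + |F y| * ‖x‖ ≤ C * ‖y‖ := by
  have main : ∀ n : ℕ, 0 < n → ‖y‖ + |F y| * ‖x‖ - (2 * (‖F‖ * ‖y‖) * M) / n ≤ C * ‖y‖ := by
    intro n hn
    have hn' : (0:ℝ) < n := by exact_mod_cast hn
    have hs : ∑ i ∈ Finset.range (n+1), (‖piece n i y‖ + |F (piece n i y)| * ‖x‖ -
        2 * (‖F‖ * ‖piece n i y‖) * M / n) ≤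
        ∑ i ∈ Finset.range (n+1), C * ‖piece n i y‖ := by
      refine Finset.sum_le_sum fun i _ => ?_
      refine le_trans ?_ (hC _)
      refine le_trans ?_ (piece_lower n i y x M _ hM hx)
      have : |F (piece n i y)| ≤ ‖F‖ * ‖piece n i y‖ := F.le_opNorm _
      gcongr
    rw [← Finset.mul_sum, piece_norm n hn] at hs
    refine le_trans ?_ hs
    rw [Finset.sum_sub_distrib, Finset.sum_add_distrib, piece_norm n hn, ← Finset.sum_mul,
      ← Finset.sum_div, ← Finset.sum_mul, ← Finset.mul_sum, ← Finset.mul_sum, piece_norm n hn]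
    have : |F y| ≤ ∑ i ∈ Finset.range (n+1), |F (piece n i y)| := by
      conv_lhs => rw [← piece_sum n hn y, map_sum]
      exact Finset.abs_sum_le_sum_abs _ _
    gcongr
  have ht := (tendsto_const_div_atTop_nhds_zero_nat (2 * (‖F‖ * ‖y‖) * M)).const_sub
    (‖y‖ + |F y| * ‖x‖)
  rw [sub_zero] at ht
  refine le_of_tendsto ht ?_
  filter_upwards [eventually_gt_atTop 0] with n hn using main n hn

lemma polyX_bdd {x : Lp ℝ 1 mu01} (hx : x ∈ polyX) : ∃ M, 0 ≤ M ∧ ∀ᵐ t ∂mu01, |x t| ≤ M := by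
  obtain ⟨p, hp⟩ := hx
  obtain ⟨M, hM⟩ := isCompact_Icc.exists_bound_of_continuousOn
    (s := Set.Icc (0:ℝ) 1) p.continuous.continuousOn
  refine ⟨M, (norm_nonneg _).trans (hM 0 (by simp)), ?_⟩
  filter_upwards [hp, ae_mem] with t a b
  rw [a]; exact hM t b

lemma polyX_daugavet : DaugavetProperty ↥polyX := by
  intro f x
  obtain ⟨F, hF, -⟩ := exists_extension_norm_eq polyX f
  obtain ⟨M, hM, hx⟩ := polyX_bdd x.2
  set C := ‖ContinuousLinearMap.id ℝ polyX + f.smulRight x‖ with hCdef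
  have hC : ∀ z, ‖z + F z • (x : Lp ℝ 1 mu01)‖ ≤ C * ‖z‖ := by
    intro z
    have hcl : IsClosed {z : Lp ℝ 1 mu01 | ‖z + F z • (x : Lp ℝ 1 mu01)‖ ≤ C * ‖z‖} :=
      isClosed_le (by fun_prop) (by fun_prop)
    have hsub : (polyX : Set (Lp ℝ 1 mu01)) ⊆
        {z : Lp ℝ 1 mu01 | ‖z + F z • (x : Lp ℝ 1 mu01)‖ ≤ C * ‖z‖} := by
      intro w hw
      have := (ContinuousLinearMap.id ℝ polyX + f.smulRight x).le_opNorm ⟨w, hw⟩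
      have h2 := hF ⟨w, hw⟩
      change ‖w + F w • (x : Lp ℝ 1 mu01)‖ ≤ C * ‖w‖
      rw [show F w = f ⟨w, hw⟩ from h2]
      exact this
    exact closure_minimal hsub hcl (polyX_dense z)
  have hD := daugavet_L1 F x M C hM hx hC
  have hC1 : 1 ≤ C := by
    have hy : ∃ y : Lp ℝ 1 mu01, y ≠ 0 := by
      by_contra hcon
      push Not at hcon
      apply polyX_not_closed
      have : (polyX : Set (Lp ℝ 1 mu01)) = Set.univ := by
        ext y
        simp [hcon y]
      rw [this]; exact isClosed_univ
    obtain ⟨y, hy⟩ := hy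
    have h0 : 0 < ‖y‖ := norm_pos_iff.2 hy
    have := hD y
    have h3 : 0 ≤ |F y| * ‖(x : Lp ℝ 1 mu01)‖ := by positivity
    nlinarith
  apply le_antisymm
  · have h1 : C ≤ ‖ContinuousLinearMap.id ℝ polyX‖ + ‖f.smulRight x‖ :=
      ContinuousLinearMap.opNorm_add_le _ _
    have h2 : ‖ContinuousLinearMap.id ℝ polyX‖ ≤ 1 := ContinuousLinearMap.norm_id_le
    linarith
  · have : ‖f.smulRight x‖ ≤ C - 1 := by
      refine ContinuousLinearMap.opNorm_le_bound _ (by linarith) fun w => ?_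
      have h1 := hD w
      rw [hF w] at h1
      rw [ContinuousLinearMap.smulRight_apply, norm_smul, Real.norm_eq_abs]
      have e1 : ‖(w : Lp ℝ 1 mu01)‖ = ‖w‖ := rfl
      have e2 : ‖(x : Lp ℝ 1 mu01)‖ = ‖x‖ := rfl
      rw [e1, e2] at h1
      linarith
    linarith

lemma polyX_smooth (f : ↥polyX) (hf : f ≠ 0) : SmoothPoint ↥polyX f := by
  intro h _
  obtain ⟨p, hp⟩ := f.2
  have hp0 : p ≠ 0 := by
    rintro rfl
    apply hf
    apply Subtype.ext
    apply Lp.ext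
    filter_upwards [hp, Lp.coeFn_zero ℝ 1 mu01] with t a b
    rw [a, Polynomial.eval_zero]
    exact b.symm
  refine smooth_aux (f : Lp ℝ 1 mu01) (h : Lp ℝ 1 mu01) ?_
  filter_upwards [hp, poly_ae_ne hp0] with t a b
  rwa [a]

/-- There is a non-closed linear subspace of `L¹[0,1]` which, with the induced norm,
has the Daugavet property and whose norm is Gâteaux differentiable at every nonzero
point. -/
theorem exists_smooth_nonclosed_daugavet_subspace_L1 :
    ∃ X : Submodule ℝ (Lp ℝ 1 mu01),
      ¬ IsClosed (X : Set (Lp ℝ 1 mu01)) ∧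
      DaugavetProperty ↥X ∧
      ∀ f : ↥X, f ≠ 0 → SmoothPoint ↥X f := by
  exact ⟨polyX, polyX_not_closed, polyX_daugavet, polyX_smooth⟩
end

section
/- Let X be a Banach space with the Daugavet property and let Z be a closed subspace of X. If X/Z̃ has the Daugavet property for every closed subspace Z̃ ⊆ Z of codimension at most 2 in Z, then Z is poor, i.e., X/Z̃ has the Daugavet property for every closed subspace Z̃ ⊆ Z. -/
/-- If `X/Z̃` has the Daugavet property for every closed subspace `Z̃ ⊆ Z` of
codimension at most 2 in `Z`, then `Z` is poor: `X/Z̃` has the Daugavet property for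
every closed subspace `Z̃ ⊆ Z`. -/
theorem poor_of_codim_le_two
    (X : Type*) [NormedAddCommGroup X] [NormedSpace ℝ X] [CompleteSpace X]
    (hX : DaugavetProperty X)
    (Z : Submodule ℝ X) (hZ : IsClosed (Z : Set X))
    (h2 : ∀ Z' : Submodule ℝ X, Z' ≤ Z → IsClosed (Z' : Set X) →
      Module.rank ℝ (↥Z ⧸ Z'.comap Z.subtype) ≤ 2 → DaugavetProperty (X ⧸ Z')) :
    ∀ Z' : Submodule ℝ X, Z' ≤ Z → IsClosed (Z' : Set X) → DaugavetProperty (X ⧸ Z') := by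
  intro Z' hZ' hZclosed f y
  obtain ⟨h, hh1, hhy⟩ := exists_dual_vector'' ℝ y
  let F : X →L[ℝ] ℝ := f.comp Z'.mkQL
  let H : X →L[ℝ] ℝ := h.comp Z'.mkQL
  have hF : ∀ x, F x = f (Submodule.Quotient.mk x) := fun x => rfl
  have hH : ∀ x, H x = h (Submodule.Quotient.mk x) := fun x => rfl
  let W : Submodule ℝ X := Z ⊓ (F.ker ⊓ H.ker)
  have hWc : IsClosed (W : Set X) :=
    hZ.inter ((F.isClosed_ker).inter H.isClosed_ker)
  have hWF : W ≤ F.ker := inf_le_right.trans inf_le_left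
  have hWH : W ≤ H.ker := inf_le_right.trans inf_le_right
  have hZmk : ∀ x ∈ Z', (Submodule.Quotient.mk x : X ⧸ Z') = 0 := fun x hx =>
    (Submodule.Quotient.mk_eq_zero Z').2 hx
  have hZW : Z' ≤ W := by
    intro x hx
    refine ⟨hZ' hx, ?_, ?_⟩
    · change F x = 0
      rw [hF, hZmk x hx, map_zero]
    · change H x = 0
      rw [hH, hZmk x hx, map_zero]
  have hrank : Module.rank ℝ (↥Z ⧸ W.comap Z.subtype) ≤ 2 := by
    let G : Z →ₗ[ℝ] ℝ × ℝ := (F.toLinearMap.prod H.toLinearMap).comp Z.subtype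
    have hk : W.comap Z.subtype = LinearMap.ker G := by
      ext x
      have : G x = (F x, H x) := rfl
      simp only [Submodule.mem_comap, LinearMap.mem_ker, this, Prod.mk_eq_zero]
      constructor
      · intro hx
        exact ⟨hWF hx, hWH hx⟩
      · intro hx
        exact ⟨x.2, hx.1, hx.2⟩
    rw [hk]
    have hinj : Function.Injective ((LinearMap.ker G).liftQ G le_rfl) :=
      LinearMap.ker_eq_bot.1 (Submodule.ker_liftQ_eq_bot _ _ _ le_rfl)
    have := LinearMap.lift_rank_le_of_injective _ hinj
    simpa [one_add_one_eq_two] using this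
  have hD := h2 W inf_le_left hWc hrank
  let q : X ⧸ Z' →ₗ[ℝ] X ⧸ W := Submodule.mapQ Z' W LinearMap.id hZW
  have hqmk : ∀ x : X, q (Submodule.Quotient.mk x) = Submodule.Quotient.mk x := fun x => rfl
  let f' : X ⧸ W →L[ℝ] ℝ := W.liftQL F hWF
  have hfq : ∀ v, f' (q v) = f v := by
    intro v
    obtain ⟨x, rfl⟩ := Submodule.Quotient.mk_surjective _ v
    rfl
  let h' : X ⧸ W →L[ℝ] ℝ := W.liftQL H hWH
  have hdq : ∀ v, h' (q v) = h v := by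
    intro v
    obtain ⟨x, rfl⟩ := Submodule.Quotient.mk_surjective _ v
    rfl
  have hlift : ∀ (w : X ⧸ W) (ε : ℝ), 0 < ε → ∃ v, q v = w ∧ ‖v‖ ≤ ‖w‖ + ε := by
    intro w ε hε
    obtain ⟨x, hx, hx'⟩ := Submodule.Quotient.norm_mk_lt w hε
    exact ⟨Submodule.Quotient.mk x, hx, (Submodule.Quotient.norm_mk_le Z' x).trans hx'.le⟩
  have hqle : ∀ v, ‖q v‖ ≤ ‖v‖ := by
    intro v
    refine le_of_forall_pos_le_add fun ε hε => ?_
    obtain ⟨x, rfl, hx'⟩ := Submodule.Quotient.norm_mk_lt v hε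
    exact (Submodule.Quotient.norm_mk_le W x).trans hx'.le
  have hfn : ‖f‖ ≤ ‖f'‖ := by
    refine f.opNorm_le_bound f'.opNorm_nonneg fun v => ?_
    rw [← hfq]
    exact (f'.le_opNorm _).trans (mul_le_mul_of_nonneg_left (hqle v) f'.opNorm_nonneg)
  have hyn : ‖y‖ ≤ ‖q y‖ := by
    have h1 : ‖h'‖ ≤ 1 := by
      refine h'.opNorm_le_bound zero_le_one fun w => ?_
      refine le_of_forall_pos_le_add fun ε hε => ?_
      obtain ⟨v, rfl, hv⟩ := hlift w ε hε
      rw [hdq, one_mul]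
      exact (h.le_of_opNorm_le hh1 v).trans (by simpa using hv)
    have h3 : h' (q y) = ‖y‖ := by rw [hdq, hhy]; rfl
    calc ‖y‖ = h' (q y) := h3.symm
      _ ≤ ‖h' (q y)‖ := Real.le_norm_self _
      _ ≤ 1 * ‖q y‖ := h'.le_of_opNorm_le h1 _
      _ = ‖q y‖ := one_mul _
  have key := hD f' (q y)
  have hT : ‖ContinuousLinearMap.id ℝ (X ⧸ W) + f'.smulRight (q y)‖ ≤
      ‖ContinuousLinearMap.id ℝ (X ⧸ Z') + f.smulRight y‖ := by
    set T := ContinuousLinearMap.id ℝ (X ⧸ Z') + f.smulRight y with hTdef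
    refine ContinuousLinearMap.opNorm_le_bound _ T.opNorm_nonneg fun w => ?_
    have hlim : ∀ ε : ℝ, 0 < ε →
        ‖(ContinuousLinearMap.id ℝ (X ⧸ W) + f'.smulRight (q y)) w‖ ≤ ‖T‖ * (‖w‖ + ε) := by
      intro ε hε
      obtain ⟨v, rfl, hv⟩ := hlift w ε hε
      have : (ContinuousLinearMap.id ℝ (X ⧸ W) + f'.smulRight (q y)) (q v) = q (T v) := by
        simp [hTdef, hfq]
      rw [this]
      exact (hqle _).trans ((T.le_opNorm v).trans
        (mul_le_mul_of_nonneg_left hv T.opNorm_nonneg))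
    have htend : Filter.Tendsto (fun ε : ℝ => ‖T‖ * (‖w‖ + ε)) (nhdsWithin 0 (Set.Ioi 0))
        (nhds (‖T‖ * (‖w‖ + 0))) :=
      (Continuous.tendsto (by fun_prop) 0).mono_left nhdsWithin_le_nhds
    rw [add_zero] at htend
    exact ge_of_tendsto htend (Filter.eventually_of_mem self_mem_nhdsWithin hlim)
  rw [ContinuousLinearMap.norm_smulRight_apply] at key ⊢
  apply le_antisymm
  · refine (norm_add_le _ _).trans ?_
    rw [ContinuousLinearMap.norm_smulRight_apply]
    gcongr
    exact ContinuousLinearMap.norm_id_le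
  · have := mul_le_mul hfn hyn (norm_nonneg _) f'.opNorm_nonneg
    linarith
end

section
/- Let X be a Banach space with the Daugavet property and let Z be a reflexive closed subspace of X. Then Z is poor in X; in particular, the quotient space X/Z has the Daugavet property. -/
/-- A real normed space is reflexive if the canonical embedding into its double dual
is surjective. -/
def ReflexiveSpace (E : Type*) [NormedAddCommGroup E] [NormedSpace ℝ E] : Prop :=
  Function.Surjective (NormedSpace.inclusionInDoubleDual ℝ E)

/-- The slice of the unit ball determined by `f` and `η`. -/
def dSlice {X : Type*} [NormedAddCommGroup X] [NormedSpace ℝ X] (f : X →L[ℝ] ℝ) (η : ℝ) : Set X :=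
  {y | ‖y‖ ≤ 1 ∧ 1 - η < f y}

lemma dSlice_convex {X : Type*} [NormedAddCommGroup X] [NormedSpace ℝ X] (f : X →L[ℝ] ℝ) (η : ℝ) :
    Convex ℝ (dSlice f η) := by
  have h1 : Convex ℝ (Metric.closedBall (0 : X) 1) := convex_closedBall _ _
  have h2 : Convex ℝ {y : X | 1 - η < f y} :=
    convex_halfSpace_gt f.toLinearMap.isLinear (1 - η)
  have : dSlice f η = Metric.closedBall (0 : X) 1 ∩ {y : X | 1 - η < f y} := by
    ext y; simp [dSlice]
  rw [this]
  exact h1.inter h2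

lemma dSlice_nonempty {X : Type*} [NormedAddCommGroup X] [NormedSpace ℝ X] (f : X →L[ℝ] ℝ)
    (hf : ‖f‖ = 1) {η : ℝ} (hη : 0 < η) : (dSlice f η).Nonempty := by
  obtain ⟨y, hy, hfy⟩ := f.exists_lt_apply_of_lt_opNorm (r := 1 - η) (by rw [hf]; linarith)
  rw [Real.norm_eq_abs] at hfy
  rcases le_total 0 (f y) with h | h
  · exact ⟨y, hy.le, by rwa [abs_of_nonneg h] at hfy⟩
  · exact ⟨-y, by rw [norm_neg]; exact hy.le, by rw [abs_of_nonpos h] at hfy; simpa using hfy⟩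

lemma apply_le_norm_of_one {X : Type*} [NormedAddCommGroup X] [NormedSpace ℝ X] (f : X →L[ℝ] ℝ)
    (hf : ‖f‖ ≤ 1) (y : X) : f y ≤ ‖y‖ := by
  have h := f.le_opNorm y
  rw [Real.norm_eq_abs] at h
  have h2 := le_abs_self (f y)
  have h3 := norm_nonneg y
  nlinarith

lemma slice_step {X : Type*} [NormedAddCommGroup X] [NormedSpace ℝ X] (hX : DaugavetProperty X)
    (f : X →L[ℝ] ℝ) (hf : ‖f‖ = 1) {η : ℝ} (hη : 0 < η) (u : X) {ε : ℝ} (hε : 0 < ε) :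
    ∃ (h : X →L[ℝ] ℝ) (θ : ℝ), ‖h‖ = 1 ∧ 0 < θ ∧ dSlice h θ ⊆ dSlice f η ∧
      ∀ y ∈ dSlice h θ, ‖u‖ + 1 - ε ≤ ‖u + y‖ := by
  by_cases hu : u = 0
  · subst hu
    refine ⟨f, min η ε, hf, lt_min hη hε, ?_, ?_⟩
    · rintro y ⟨h1, h2⟩
      exact ⟨h1, by linarith [min_le_left η ε]⟩
    · rintro y ⟨h1, h2⟩
      have := apply_le_norm_of_one f hf.le y
      simp only [norm_zero, zero_add]
      linarith [min_le_right η ε]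
  have hu0 : 0 < ‖u‖ := norm_pos_iff.mpr hu
  obtain ⟨m, hm0, hmη, hmε, hm1⟩ : ∃ m : ℝ, 0 < m ∧ m ≤ η ∧ m ≤ ε / 2 ∧ m ≤ 1 :=
    ⟨min η (min (ε / 2) 1), by positivity, min_le_left _ _,
      (min_le_right _ _).trans (min_le_left _ _), (min_le_right _ _).trans (min_le_right _ _)⟩
  obtain ⟨δ, hδ0, hδm, hδu⟩ : ∃ δ : ℝ, 0 < δ ∧ δ ≤ m / 4 ∧ δ ≤ ‖u‖ * (m / 4) :=
    ⟨min (m / 4) (‖u‖ * (m / 4)), by positivity, min_le_left _ _, min_le_right _ _⟩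
  have hD := hX f u
  rw [ContinuousLinearMap.norm_smulRight_apply, hf, one_mul] at hD
  obtain ⟨y0, hy0, hfy0, hnorm⟩ : ∃ y0 : X, ‖y0‖ ≤ 1 ∧ 0 ≤ f y0 ∧
      1 + ‖u‖ - δ < ‖y0 + f y0 • u‖ := by
    obtain ⟨y, hy, hfy⟩ := (ContinuousLinearMap.id ℝ X + f.smulRight u).exists_lt_apply_of_lt_opNorm
      (r := 1 + ‖u‖ - δ) (by rw [hD]; linarith)
    simp only [ContinuousLinearMap.add_apply, ContinuousLinearMap.id_apply,
      ContinuousLinearMap.smulRight_apply] at hfy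
    rcases le_total 0 (f y) with h | h
    · exact ⟨y, hy.le, h, hfy⟩
    · refine ⟨-y, by rw [norm_neg]; exact hy.le, by simpa using h, ?_⟩
      have : -y + f (-y) • u = -(y + f y • u) := by simp [neg_smul]; abel
      rw [this, norm_neg]; exact hfy
  obtain ⟨g, hg1, hg2⟩ := exists_dual_vector'' ℝ (y0 + f y0 • u)
  simp only [map_add, map_smul, smul_eq_mul, RCLike.ofReal_real_eq_id, id] at hg2
  have hfy1 : f y0 ≤ 1 := (apply_le_norm_of_one f hf.le y0).trans hy0
  have hgy1 : g y0 ≤ 1 := (apply_le_norm_of_one g hg1 y0).trans hy0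
  have hgu : g u ≤ ‖u‖ := apply_le_norm_of_one g hg1 u
  rw [← hg2] at hnorm
  have hfu : f y0 * g u ≤ f y0 * ‖u‖ := mul_le_mul_of_nonneg_left hgu hfy0
  have hfu' : f y0 * ‖u‖ ≤ ‖u‖ := by nlinarith
  have hgy : 1 - δ < g y0 := by linarith
  have hfg : ‖u‖ - δ < f y0 * g u := by linarith
  have hgupos : 0 ≤ g u := by
    by_contra hneg
    push Not at hneg
    have : f y0 * g u ≤ 0 := mul_nonpos_of_nonneg_of_nonpos hfy0 hneg.le
    nlinarith
  have hgu2 : ‖u‖ - δ < g u := by nlinarith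
  have hfy : 1 - m / 4 < f y0 := by
    have : ‖u‖ * (1 - m / 4) < ‖u‖ * f y0 := by linarith
    exact lt_of_mul_lt_mul_left this hu0.le
  have hH : 2 - m / 2 < ‖g + f‖ := by
    have h1 := (g + f).le_opNorm y0
    rw [Real.norm_eq_abs] at h1
    have h2 := le_abs_self ((g + f) y0)
    have h4 : (g + f) y0 = g y0 + f y0 := rfl
    have h3 : ‖g + f‖ * ‖y0‖ ≤ ‖g + f‖ := by
      have := norm_nonneg (g + f); nlinarith
    linarith
  have hH2 : ‖g + f‖ ≤ 2 := by
    have := norm_add_le g f; linarith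
  have hHpos : 0 < ‖g + f‖ := by linarith
  have key : ∀ y ∈ dSlice (‖g + f‖⁻¹ • (g + f)) (m / 4), 1 - m < f y ∧ 1 - m < g y := by
    rintro y ⟨h1, h2⟩
    have h3 : (‖g + f‖⁻¹ • (g + f)) y = ‖g + f‖⁻¹ * (g y + f y) := rfl
    rw [h3, lt_inv_mul_iff₀ hHpos] at h2
    have h4 := (apply_le_norm_of_one f hf.le y).trans h1
    have h5 := (apply_le_norm_of_one g hg1 y).trans h1
    constructor <;> nlinarith
  refine ⟨‖g + f‖⁻¹ • (g + f), m / 4, ?_, by positivity, ?_, ?_⟩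
  · rw [norm_smul, norm_inv, norm_norm, inv_mul_cancel₀ hHpos.ne']
  · intro y hy
    exact ⟨hy.1, by linarith [(key y hy).1]⟩
  · intro y hy
    have h1 := (key y hy).2
    have h2 := apply_le_norm_of_one g hg1 (u + y)
    rw [map_add] at h2
    linarith

lemma slice_finite {X : Type*} [NormedAddCommGroup X] [NormedSpace ℝ X] (hX : DaugavetProperty X)
    {ε : ℝ} (hε : 0 < ε) {t : Set X} (ht : t.Finite)
    (f : X →L[ℝ] ℝ) (hf : ‖f‖ = 1) {η : ℝ} (hη : 0 < η) :
    ∃ (h : X →L[ℝ] ℝ) (θ : ℝ), ‖h‖ = 1 ∧ 0 < θ ∧ dSlice h θ ⊆ dSlice f η ∧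
      ∀ y ∈ dSlice h θ, ∀ u ∈ t, ‖u‖ + 1 - ε ≤ ‖u + y‖ := by
  induction t, ht using Set.Finite.induction_on with
  | empty => exact ⟨f, η, hf, hη, subset_rfl, by simp⟩
  | @insert a s _ _ ih =>
    obtain ⟨h, θ, h1, h2, h3, h4⟩ := ih
    obtain ⟨k, τ, k1, k2, k3, k4⟩ := slice_step hX h h1 h2 a hε
    refine ⟨k, τ, k1, k2, k3.trans h3, ?_⟩
    intro y hy u hu
    rcases hu with rfl | hu
    · exact k4 y hy
    · exact h4 y (k3 hy) u hu

lemma slice_compact {X : Type*} [NormedAddCommGroup X] [NormedSpace ℝ X] (hX : DaugavetProperty X)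
    {ε : ℝ} (hε : 0 < ε) {K : Set X} (hK : IsCompact K)
    (f : X →L[ℝ] ℝ) (hf : ‖f‖ = 1) {η : ℝ} (hη : 0 < η) :
    ∃ (h : X →L[ℝ] ℝ) (θ : ℝ), ‖h‖ = 1 ∧ 0 < θ ∧ dSlice h θ ⊆ dSlice f η ∧
      ∀ y ∈ dSlice h θ, ∀ u ∈ K, ‖u‖ + 1 - ε ≤ ‖u + y‖ := by
  obtain ⟨t, ht, hKt⟩ := Metric.totallyBounded_iff.mp hK.totallyBounded (ε / 4) (by positivity)
  obtain ⟨h, θ, h1, h2, h3, h4⟩ := slice_finite hX (ε := ε / 4) (by positivity) ht f hf hη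
  refine ⟨h, θ, h1, h2, h3, ?_⟩
  intro y hy u hu
  obtain ⟨v, hv, huv⟩ := Set.mem_iUnion₂.mp (hKt hu)
  rw [Metric.mem_ball, dist_eq_norm] at huv
  have a1 := h4 y hy v hv
  have a2 : ‖v + y‖ ≤ ‖u + y‖ + ‖u - v‖ := by
    have : v + y = (u + y) - (u - v) := by abel
    rw [this]; exact norm_sub_le _ _
  have a3 : ‖u‖ ≤ ‖v‖ + ‖u - v‖ := by
    have : u = v + (u - v) := by abel
    calc ‖u‖ = ‖v + (u - v)‖ := by rw [← this]
      _ ≤ _ := norm_add_le _ _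
  linarith

lemma dual_limit {E : Type*} [NormedAddCommGroup E] [NormedSpace ℝ E]
    (J : ℕ → StrongDual ℝ E) (R : ℝ) (hR : ∀ n, ‖J n‖ ≤ R) :
    ∃ φ : StrongDual ℝ E, ∀ e : E,
      Filter.Tendsto (fun n => J n e) (Filter.hyperfilter ℕ : Filter ℕ) (nhds (φ e)) := by
  have hcomp := WeakDual.isCompact_closedBall (𝕜 := ℝ) (0 : StrongDual ℝ E) R
  let J' : ℕ → WeakDual ℝ E := fun n => StrongDual.toWeakDual (J n)
  have hmem : ∀ n, J' n ∈ WeakDual.toStrongDual ⁻¹' Metric.closedBall (0 : StrongDual ℝ E) R := by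
    intro n
    rw [Set.mem_preimage, mem_closedBall_zero_iff]
    exact hR n
  obtain ⟨φ, -, hφ⟩ := hcomp.ultrafilter_le_nhds ((Filter.hyperfilter ℕ).map J') (by
    rw [Filter.le_principal_iff]
    exact Filter.mem_map.mpr (Filter.univ_mem' hmem))
  refine ⟨WeakDual.toStrongDual φ, fun e => ?_⟩
  exact ((WeakDual.eval_continuous (𝕜 := ℝ) e).tendsto φ).comp
    (show Filter.Tendsto J' (Filter.hyperfilter ℕ : Filter ℕ) (nhds φ) from hφ)

lemma weak_limit {X : Type*} [NormedAddCommGroup X] [NormedSpace ℝ X]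
    (Z : Submodule ℝ X) (hrefl : ReflexiveSpace ↥Z) (z : ℕ → X) (hz : ∀ n, z n ∈ Z)
    (R : ℝ) (hR : ∀ n, ‖z n‖ ≤ R) :
    ∃ w : X, ∀ g : X →L[ℝ] ℝ,
      Filter.Tendsto (fun n => g (z n)) (Filter.hyperfilter ℕ : Filter ℕ) (nhds (g w)) := by
  obtain ⟨φ, hφ⟩ := dual_limit
    (fun n => NormedSpace.inclusionInDoubleDual ℝ Z ⟨z n, hz n⟩) R
    (fun n => (NormedSpace.double_dual_bound ℝ Z ⟨z n, hz n⟩).trans (hR n))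
  obtain ⟨w, rfl⟩ := hrefl φ
  exact ⟨w, fun g => hφ (g.comp Z.subtypeL)⟩

lemma weak_limit_mem {X : Type*} [NormedAddCommGroup X] [NormedSpace ℝ X]
    (z : ℕ → X) (w : X) (hw : ∀ g : X →L[ℝ] ℝ,
      Filter.Tendsto (fun n => g (z n)) (Filter.hyperfilter ℕ : Filter ℕ) (nhds (g w))) (m : ℕ) :
    w ∈ closure (convexHull ℝ (z '' Set.Ici m)) := by
  by_contra hcon
  obtain ⟨g, c, h1, h2⟩ := geometric_hahn_banach_point_closed
    (convex_convexHull ℝ (z '' Set.Ici m)).closure isClosed_closure hcon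
  have h3 : ∀ᶠ n in (Filter.hyperfilter ℕ : Filter ℕ), g (z n) < c :=
    (hw g).eventually (gt_mem_nhds h1)
  have h4 : ∀ᶠ n in (Filter.hyperfilter ℕ : Filter ℕ), m ≤ n :=
    Nat.hyperfilter_le_atTop (Filter.eventually_ge_atTop m)
  obtain ⟨n, h5, h6⟩ := (h3.and h4).exists
  have := h2 (z n) (subset_closure (subset_convexHull ℝ _ ⟨n, h6, rfl⟩))
  linarith

lemma mem_hull_initial {X : Type*} [NormedAddCommGroup X] [NormedSpace ℝ X]
    (z : ℕ → X) {p : X} (s : Set ℕ) (hp : p ∈ convexHull ℝ (z '' s)) :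
    ∃ m, p ∈ convexHull ℝ (z '' Set.Iic m) := by
  have hmono : Monotone fun m : ℕ => convexHull ℝ (z '' Set.Iic m) := fun a b hab =>
    convexHull_mono (Set.image_mono (Set.Iic_subset_Iic.mpr hab))
  have hconv : Convex ℝ (⋃ m, convexHull ℝ (z '' Set.Iic m)) :=
    hmono.directed_le.convex_iUnion fun _ => convex_convexHull ℝ _
  have hsub : z '' s ⊆ ⋃ m, convexHull ℝ (z '' Set.Iic m) := by
    rintro _ ⟨n, -, rfl⟩
    exact Set.mem_iUnion.mpr ⟨n, subset_convexHull ℝ _ ⟨n, Set.mem_Iic.mpr le_rfl, rfl⟩⟩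
  exact Set.mem_iUnion.mp (convexHull_min hsub hconv hp)

/-- Main geometric claim. -/
lemma exists_far {X : Type*} [NormedAddCommGroup X] [NormedSpace ℝ X] (hX : DaugavetProperty X)
    (Z : Submodule ℝ X) (hrefl : ReflexiveSpace ↥Z) (Z' : Submodule ℝ X) (hZ' : Z' ≤ Z)
    (x : X) (d : ℝ) (hd : ∀ z ∈ Z', d ≤ ‖x + z‖) (f : X →L[ℝ] ℝ) (hf : ‖f‖ = 1)
    {ε : ℝ} (hε : 0 < ε) :
    ∃ y ∈ dSlice f ε, ∀ z ∈ Z', d + 1 - ε ≤ ‖x + y + z‖ := by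
  by_contra hcon
  push Not at hcon
  -- the convex sets of counterexamples
  let A : Set X → Set X := fun S => {z | z ∈ Z' ∧ ∃ y ∈ S, ‖x + y + z‖ ≤ d + 1 - ε}
  have hAconv : ∀ S : Set X, Convex ℝ S → Convex ℝ (A S) := by
    rintro S hS z1 ⟨hz1, y1, hy1, h1⟩ z2 ⟨hz2, y2, hy2, h2⟩ a b ha hb hab
    refine ⟨Z'.add_mem (Z'.smul_mem _ hz1) (Z'.smul_mem _ hz2), a • y1 + b • y2,
      hS hy1 hy2 ha hb hab, ?_⟩
    have e : x + (a • y1 + b • y2) + (a • z1 + b • z2)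
        = a • (x + y1 + z1) + b • (x + y2 + z2) := by
      have : x = a • x + b • x := by rw [← add_smul, hab, one_smul]
      nth_rewrite 1 [this]
      simp only [smul_add]; abel
    rw [e]
    calc _ ≤ ‖a • (x + y1 + z1)‖ + ‖b • (x + y2 + z2)‖ := norm_add_le _ _
      _ = a * ‖x + y1 + z1‖ + b * ‖x + y2 + z2‖ := by
        rw [norm_smul, norm_smul, Real.norm_of_nonneg ha, Real.norm_of_nonneg hb]
      _ ≤ a * (d + 1 - ε) + b * (d + 1 - ε) := by gcongr
      _ = d + 1 - ε := by rw [← add_mul, hab, one_mul]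
  have hAmono : ∀ S T : Set X, S ⊆ T → A S ⊆ A T := by
    rintro S T hST z ⟨hz, y, hy, h⟩
    exact ⟨hz, y, hST hy, h⟩
  -- states: a slice inside the original one, and a finite set
  let St := {p : (X →L[ℝ] ℝ) × ℝ × Set X //
    ‖p.1‖ = 1 ∧ 0 < p.2.1 ∧ dSlice p.1 p.2.1 ⊆ dSlice f ε ∧ p.2.2.Finite}
  have hpick : ∀ s : St, ∃ z, z ∈ A (dSlice s.1.1 s.1.2.1) := by
    rintro ⟨⟨g, η, F⟩, h1, h2, h3, h4⟩
    obtain ⟨y, hy⟩ := dSlice_nonempty g h1 h2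
    obtain ⟨z, hz, hyz⟩ := hcon y (h3 hy)
    exact ⟨z, hz, y, hy, hyz.le⟩
  choose pick hpick using hpick
  have hstep : ∀ s : St, ∃ s' : St, dSlice s'.1.1 s'.1.2.1 ⊆ dSlice s.1.1 s.1.2.1 ∧
      s'.1.2.2 = insert (pick s) s.1.2.2 ∧
      ∀ y ∈ dSlice s'.1.1 s'.1.2.1, ∀ u ∈ convexHull ℝ (insert (pick s) s.1.2.2),
        ‖x + u‖ + 1 - ε / 4 ≤ ‖x + u + y‖ := by
    intro s
    obtain ⟨h1, h2, h3, h4⟩ := s.2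
    have hK : IsCompact ((fun u => x + u) '' convexHull ℝ (insert (pick s) s.1.2.2)) :=
      (Set.Finite.isCompact_convexHull ℝ (h4.insert (pick s))).image (by fun_prop)
    obtain ⟨k, θ, k1, k2, k3, k4⟩ := slice_compact hX (ε := ε / 4) (by positivity) hK s.1.1 h1 h2
    refine ⟨⟨⟨k, θ, insert (pick s) s.1.2.2⟩, k1, k2, k3.trans h3, h4.insert _⟩, k3, rfl, ?_⟩
    intro y hy u hu
    exact k4 y hy _ ⟨u, hu, rfl⟩
  choose next hnext1 hnext2 hnext3 using hstep
  let s0 : St := ⟨⟨f, ε, ∅⟩, hf, hε, subset_rfl, Set.finite_empty⟩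
  let s : ℕ → St := fun n => Nat.rec s0 (fun _ t => next t) n
  have hs : ∀ n, s (n + 1) = next (s n) := fun n => rfl
  let z : ℕ → X := fun n => pick (s n)
  let S : ℕ → Set X := fun n => dSlice (s n).1.1 (s n).1.2.1
  have hSanti : Antitone S := antitone_nat_of_succ_le fun n => by
    change dSlice (s (n + 1)).1.1 (s (n + 1)).1.2.1 ⊆ _
    rw [hs]; exact hnext1 (s n)
  have hF : ∀ n, z '' Set.Iic n ⊆ (s (n + 1)).1.2.2 := by
    intro n
    induction n with
    | zero =>
      rintro _ ⟨i, hi, rfl⟩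
      have : i = 0 := Nat.le_zero.mp hi
      subst this
      rw [hs, hnext2]
      exact Set.mem_insert _ _
    | succ n ih =>
      rintro _ ⟨i, hi, rfl⟩
      rw [hs (n + 1), hnext2]
      rcases Nat.lt_or_ge n i with h | h
      · have : i = n + 1 := le_antisymm hi h
        subst this
        exact Set.mem_insert _ _
      · exact Set.mem_insert_of_mem _ (ih ⟨i, h, rfl⟩)
  have hzA : ∀ n, z n ∈ A (S n) := fun n => hpick (s n)
  have hgood : ∀ n, ∀ y ∈ S (n + 1), ∀ u ∈ convexHull ℝ (z '' Set.Iic n),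
      ‖x + u‖ + 1 - ε / 4 ≤ ‖x + u + y‖ := by
    intro n y hy u hu
    have h1 := convexHull_mono (𝕜 := ℝ) (hF n) hu
    rw [hs, hnext2] at h1
    exact hnext3 (s n) y hy u h1
  have hbound : ∀ n, ‖z n‖ ≤ d + 1 - ε + ‖x‖ + 1 := by
    intro n
    obtain ⟨-, y, hy, h⟩ := hzA n
    have e : z n = (x + y + z n) - x - y := by abel
    have h1 := norm_sub_le ((x + y + z n) - x) y
    have h2 := norm_sub_le (x + y + z n) x
    rw [← e] at h1
    linarith [hy.1]
  obtain ⟨w, hw⟩ := weak_limit Z hrefl z (fun n => hZ' (hzA n).1) _ hbound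
  obtain ⟨p, hp, hwp⟩ := Metric.mem_closure_iff.mp (weak_limit_mem z w hw 0) (ε / 4) (by positivity)
  obtain ⟨m, hpm⟩ := mem_hull_initial z _ hp
  obtain ⟨q, hq, hwq⟩ := Metric.mem_closure_iff.mp (weak_limit_mem z w hw (m + 1)) (ε / 4)
    (by positivity)
  have hqA : q ∈ A (S (m + 1)) := by
    refine convexHull_min ?_ (hAconv _ (dSlice_convex _ _)) hq
    rintro _ ⟨n, hn, rfl⟩
    exact hAmono _ _ (hSanti hn) (hzA n)
  obtain ⟨-, y, hy, hqy⟩ := hqA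
  have hpZ : p ∈ Z' := by
    refine convexHull_min ?_ Z'.convex hp
    rintro _ ⟨n, -, rfl⟩
    exact (hzA n).1
  have h1 := hgood m y hy p hpm
  have h2 := hd p hpZ
  have h3 : ‖p - q‖ < ε / 2 := by
    rw [← dist_eq_norm]
    have := dist_triangle_left p q w
    linarith
  have h4 : ‖x + p + y‖ ≤ ‖x + y + q‖ + ‖p - q‖ := by
    have e : x + p + y = (x + y + q) + (p - q) := by abel
    rw [e]; exact norm_add_le _ _
  linarith

lemma daugavet_quotient {X : Type*} [NormedAddCommGroup X] [NormedSpace ℝ X]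
    (hX : DaugavetProperty X) (Z : Submodule ℝ X) (hrefl : ReflexiveSpace ↥Z)
    (Z' : Submodule ℝ X) (hZ' : Z' ≤ Z) : DaugavetProperty (X ⧸ Z') := by
  intro f q
  have hnt : Nontrivial X := by
    by_contra h
    rw [not_nontrivial_iff_subsingleton] at h
    have := hX 0 0
    have e : ContinuousLinearMap.id ℝ X + (0 : X →L[ℝ] ℝ).smulRight (0 : X) = 0 := by
      ext y; exact Subsingleton.elim _ _
    rw [e, norm_zero] at this
    have := norm_nonneg ((0 : X →L[ℝ] ℝ).smulRight (0 : X))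
    linarith
  have hsm : ‖f.smulRight q‖ = ‖f‖ * ‖q‖ := by
    apply le_antisymm
    · refine ContinuousLinearMap.opNorm_le_bound _ (by positivity) fun v => ?_
      rw [ContinuousLinearMap.smulRight_apply, norm_smul]
      have := f.le_opNorm v
      calc _ ≤ ‖f‖ * ‖v‖ * ‖q‖ := by gcongr
        _ = _ := by ring
    · rw [ContinuousLinearMap.norm_smulRight_apply]
  apply le_antisymm
  · refine (norm_add_le _ _).trans ?_
    gcongr
    exact ContinuousLinearMap.norm_id_le
  rw [hsm]
  obtain ⟨x, rfl⟩ := Submodule.Quotient.mk_surjective Z' q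
  let F : X →L[ℝ] ℝ := LinearMap.mkContinuous (f.toLinearMap.comp Z'.mkQ) ‖f‖ (fun v => by
    refine (f.le_opNorm _).trans ?_
    gcongr
    exact Submodule.Quotient.norm_mk_le Z' v)
  have hFapp : ∀ v, F v = f (Submodule.Quotient.mk v) := fun v => rfl
  have hfF : ‖f‖ ≤ ‖F‖ := by
    refine ContinuousLinearMap.opNorm_le_bound _ (norm_nonneg _) fun v => ?_
    refine le_of_forall_pos_le_add fun δ hδ => ?_
    have hpos : 0 < δ / (‖F‖ + 1) := by positivity
    obtain ⟨u, hu, hun⟩ := Submodule.Quotient.norm_mk_lt v hpos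
    have h1 := F.le_opNorm u
    rw [hFapp, hu] at h1
    have h2 : ‖F‖ * (δ / (‖F‖ + 1)) ≤ δ := by
      rw [mul_div_assoc', div_le_iff₀ (by positivity)]
      nlinarith [norm_nonneg F]
    nlinarith [norm_nonneg F]
  obtain ⟨f1, hf1, hFf1⟩ : ∃ f1 : X →L[ℝ] ℝ, ‖f1‖ = 1 ∧ F = ‖F‖ • f1 := by
    by_cases h : F = 0
    · obtain ⟨v, hv⟩ := exists_ne (0 : X)
      obtain ⟨g, hg, -⟩ := exists_dual_vector ℝ v (norm_ne_zero_iff.mpr hv)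
      exact ⟨g, hg, by simp [h]⟩
    · have hn : ‖F‖ ≠ 0 := norm_ne_zero_iff.mpr h
      exact ⟨‖F‖⁻¹ • F, by rw [norm_smul, norm_inv, norm_norm, inv_mul_cancel₀ hn],
        by rw [smul_smul, mul_inv_cancel₀ hn, one_smul]⟩
  set Q : ℝ := ‖(Submodule.Quotient.mk x : X ⧸ Z')‖ with hQ
  have hQ0 : 0 ≤ Q := norm_nonneg _
  have hFn := norm_nonneg F
  suffices h : 1 + ‖F‖ * Q ≤ ‖ContinuousLinearMap.id ℝ (X ⧸ Z') +
      f.smulRight (Submodule.Quotient.mk x)‖ by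
    have : ‖f‖ * Q ≤ ‖F‖ * Q := by gcongr
    linarith
  have hε : ∀ ε : ℝ, 0 < ε → 1 + ‖F‖ * Q ≤ ‖ContinuousLinearMap.id ℝ (X ⧸ Z') +
      f.smulRight (Submodule.Quotient.mk x)‖ + ε * (1 + ‖F‖ * Q) := by
    intro ε hε
    obtain ⟨y, ⟨hy1, hy2⟩, hy⟩ := exists_far hX Z hrefl Z' hZ' (‖F‖ • x) (‖F‖ * Q) (by
      intro z hz
      have e : (Submodule.Quotient.mk (‖F‖ • x + z) : X ⧸ Z')
          = ‖F‖ • Submodule.Quotient.mk x := by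
        rw [Submodule.Quotient.mk_add, (Submodule.Quotient.mk_eq_zero Z').mpr hz, add_zero,
          Submodule.Quotient.mk_smul]
      have h1 := Submodule.Quotient.norm_mk_le Z' (‖F‖ • x + z)
      rw [e, norm_smul, norm_norm] at h1
      exact h1) f1 hf1 hε
    have hq : ‖F‖ * Q + 1 - ε ≤ ‖(Submodule.Quotient.mk (‖F‖ • x + y) : X ⧸ Z')‖ := by
      refine le_of_forall_pos_le_add fun δ hδ => ?_
      obtain ⟨u, hu, hun⟩ := Submodule.Quotient.norm_mk_lt
        (Submodule.Quotient.mk (‖F‖ • x + y) : X ⧸ Z') hδ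
      have h1 := hy _ ((Submodule.Quotient.eq Z').mp hu)
      have e : ‖F‖ • x + y + (u - (‖F‖ • x + y)) = u := by abel
      rw [e] at h1
      linarith
    have hop := (ContinuousLinearMap.id ℝ (X ⧸ Z') +
      f.smulRight (Submodule.Quotient.mk x)).le_opNorm (Submodule.Quotient.mk y)
    have hyq : ‖(Submodule.Quotient.mk y : X ⧸ Z')‖ ≤ 1 :=
      (Submodule.Quotient.norm_mk_le Z' y).trans hy1
    have hfy : f (Submodule.Quotient.mk y) = ‖F‖ * f1 y := by
      rw [← hFapp]
      exact congrArg (fun G : X →L[ℝ] ℝ => G y) hFf1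
    have hf1y : f1 y ≤ 1 := (apply_le_norm_of_one f1 hf1.le y).trans hy1
    simp only [ContinuousLinearMap.add_apply, ContinuousLinearMap.id_apply,
      ContinuousLinearMap.smulRight_apply, hfy] at hop
    have e : (Submodule.Quotient.mk (‖F‖ • x + y) : X ⧸ Z')
        = (Submodule.Quotient.mk y + (‖F‖ * f1 y) • Submodule.Quotient.mk x)
          + (‖F‖ * (1 - f1 y)) • Submodule.Quotient.mk x := by
      rw [Submodule.Quotient.mk_add, Submodule.Quotient.mk_smul]
      module
    have h5 : ‖(‖F‖ * (1 - f1 y)) • (Submodule.Quotient.mk x : X ⧸ Z')‖ ≤ ε * (‖F‖ * Q) := by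
      rw [norm_smul, Real.norm_of_nonneg (mul_nonneg hFn (by linarith)), ← hQ]
      have : ‖F‖ * Q * (1 - f1 y) ≤ ‖F‖ * Q * ε :=
        mul_le_mul_of_nonneg_left (by linarith) (by positivity)
      linarith
    rw [e] at hq
    have h6 := hq.trans (norm_add_le _ _)
    have h7 := mul_le_of_le_one_right (norm_nonneg (ContinuousLinearMap.id ℝ (X ⧸ Z') +
      f.smulRight (Submodule.Quotient.mk x))) hyq
    linarith
  refine le_of_forall_pos_le_add fun δ hδ => ?_
  have hp : 0 < 1 + ‖F‖ * Q := by positivity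
  have := hε (δ / (1 + ‖F‖ * Q)) (by positivity)
  rwa [div_mul_cancel₀ _ hp.ne'] at this

/-- A reflexive closed subspace `Z` of a Banach space with the Daugavet property is
poor; in particular `X/Z` has the Daugavet property. -/
theorem reflexive_subspace_poor
    (X : Type*) [NormedAddCommGroup X] [NormedSpace ℝ X] [CompleteSpace X]
    (hX : DaugavetProperty X)
    (Z : Submodule ℝ X) (hZ : IsClosed (Z : Set X)) (hrefl : ReflexiveSpace ↥Z) :
    (∀ Z' : Submodule ℝ X, Z' ≤ Z → IsClosed (Z' : Set X) → DaugavetProperty (X ⧸ Z')) ∧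
      DaugavetProperty (X ⧸ Z) :=
  ⟨fun Z' h _ => daugavet_quotient hX Z hrefl Z' h, daugavet_quotient hX Z hrefl Z le_rfl⟩
end

section
/- Let Λ = (λ_i) be a strictly increasing sequence of positive real numbers with λ_i → ∞, and let Z be the closed linear span in C[0,1] of the functions {1, x^{λ₁}, x^{λ₂}, …}. Then Z is not poor in C[0,1]; that is, there exists a closed subspace Z̃ ⊆ Z such that the quotient C[0,1]/Z̃ does not have the Daugavet property. -/
/-- The Banach space `C[0,1]` of continuous real functions on `[0,1]` with the sup norm. -/
abbrev C01 : Type := C(Set.Icc (0 : ℝ) 1, ℝ)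

/-- The monomial `x ↦ x^λ` on `[0,1]` as a continuous map, for `0 < λ`. -/
noncomputable def monomial (l : ℝ) (hl : 0 < l) : C01 :=
  ⟨fun x => (x : ℝ) ^ l, continuous_subtype_val.rpow_const fun _ => Or.inr hl.le⟩

/-- The Müntz space: the closed linear span in `C[0,1]` of `{1, x^{λ₁}, x^{λ₂}, …}`. -/
noncomputable def muntzSpace (Λ : ℕ → ℝ) (hpos : ∀ i, 0 < Λ i) : Submodule ℝ C01 :=
  (Submodule.span ℝ
    ({(1 : C01)} ∪ Set.range fun i => monomial (Λ i) (hpos i))).topologicalClosure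

lemma muntz_approx (Λ : ℕ → ℝ) (hpos : ∀ i, 0 < Λ i)
    (htop : Filter.Tendsto Λ Filter.atTop Filter.atTop) (m : C01) (ε : ℝ) (hε : 0 < ε) :
    ∃ n, ‖m - (m 1) • monomial (Λ n) (hpos n)‖ ≤ ‖m‖ + ε := by
  have hc := Metric.continuous_iff.1 m.continuous 1 ε hε
  obtain ⟨δ, hδ, h⟩ := hc
  have hr1 : max (1 - δ) (1/2) < 1 := max_lt (by linarith) (by norm_num)
  have hr0 : (0:ℝ) < max (1 - δ) (1/2) := lt_max_of_lt_right (by norm_num)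
  have ht : Filter.Tendsto (fun n => |m 1| * (max (1 - δ) (1/2)) ^ (Λ n)) Filter.atTop
      (nhds (|m 1| * 0)) :=
    ((tendsto_rpow_atTop_of_base_lt_one _ (by linarith) hr1).comp htop).const_mul _
  rw [mul_zero] at ht
  obtain ⟨n, hn⟩ := (ht.eventually_lt_const hε).exists
  refine ⟨n, ?_⟩
  rw [ContinuousMap.norm_le _ (by positivity)]
  intro x
  have hx0 := x.2.1
  have hx1 := x.2.2
  have e : (m - (m 1) • monomial (Λ n) (hpos n)) x = m x - m 1 * (x : ℝ) ^ (Λ n) := rfl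
  have hp0 : 0 ≤ (x : ℝ) ^ (Λ n) := Real.rpow_nonneg hx0 _
  have hp1 : (x : ℝ) ^ (Λ n) ≤ 1 := Real.rpow_le_one hx0 hx1 (hpos n).le
  have hm : |m x| ≤ ‖m‖ := m.norm_coe_le_norm x
  rw [e, Real.norm_eq_abs]
  rcases le_or_gt (x : ℝ) (max (1 - δ) (1/2)) with hx | hx
  · have h2 : (x : ℝ) ^ (Λ n) ≤ (max (1 - δ) (1/2)) ^ (Λ n) :=
      Real.rpow_le_rpow hx0 hx (hpos n).le
    have h3 := mul_le_mul_of_nonneg_left h2 (abs_nonneg (m 1))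
    have h4 := abs_sub (m x) (m 1 * (x : ℝ) ^ (Λ n))
    rw [abs_mul, abs_of_nonneg hp0] at h4
    linarith
  · have hx' : 1 - δ < x := lt_of_le_of_lt (le_max_left _ _) hx
    have hd : |m x - m 1| < ε := by
      have := h x (by
        rw [Subtype.dist_eq, Real.dist_eq, abs_lt]
        constructor
        · simp; linarith
        · simp; linarith)
      rwa [Real.dist_eq] at this
    have e2 : m x - m 1 * (x : ℝ) ^ (Λ n)
        = (m x - m 1) * (x : ℝ) ^ (Λ n) + m x * (1 - (x : ℝ) ^ (Λ n)) := by ring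
    rw [e2]
    refine (abs_add_le _ _).trans ?_
    rw [abs_mul, abs_mul, abs_of_nonneg hp0, abs_of_nonneg (sub_nonneg.2 hp1)]
    nlinarith [abs_nonneg (m x), abs_nonneg (m x - m 1)]

lemma not_daugavet_of {X : Type*} [SeminormedAddCommGroup X] [NormedSpace ℝ X]
    (f : X →L[ℝ] ℝ) (e : X) (he : f e = 1) (hq : ∀ q, ‖q + f q • (-e)‖ ≤ ‖q‖) :
    ¬ DaugavetProperty X := by
  intro hD
  have h := hD f (-e)
  have hb : ‖ContinuousLinearMap.id ℝ X + f.smulRight (-e)‖ ≤ 1 :=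
    ContinuousLinearMap.opNorm_le_bound _ zero_le_one fun q => by
      rw [one_mul]; exact hq q
  have h0 : ‖f.smulRight (-e)‖ = 0 := le_antisymm (by linarith) (norm_nonneg _)
  have h1 := (f.smulRight (-e)).le_opNorm e
  rw [h0, zero_mul] at h1
  have h2 := f.le_opNorm (f.smulRight (-e) e)
  rw [le_antisymm h1 (norm_nonneg _), mul_zero] at h2
  have h3 : f (f.smulRight (-e) e) = -1 := by
    rw [ContinuousLinearMap.smulRight_apply, map_smul, map_neg, he]
    simp
  rw [h3] at h2
  norm_num at h2

theorem muntzSpace_not_poor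
    (Λ : ℕ → ℝ) (hmono : StrictMono Λ) (hpos : ∀ i, 0 < Λ i)
    (htop : Filter.Tendsto Λ Filter.atTop Filter.atTop) :
    ∃ Z' : Submodule ℝ C01, Z' ≤ muntzSpace Λ hpos ∧ IsClosed (Z' : Set C01) ∧
      ¬ DaugavetProperty (C01 ⧸ Z') := by
  let ev : C01 →L[ℝ] ℝ := ContinuousMap.evalCLM ℝ (1 : Set.Icc (0:ℝ) 1)
  have hev : ∀ m : C01, ev m = m 1 := fun _ => rfl
  let Z' : Submodule ℝ C01 := muntzSpace Λ hpos ⊓ LinearMap.ker (ev : C01 →ₗ[ℝ] ℝ)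
  have hle : Z' ≤ LinearMap.ker (ev : C01 →ₗ[ℝ] ℝ) := inf_le_right
  refine ⟨Z', inf_le_left, ?_, ?_⟩
  · exact (Submodule.isClosed_topologicalClosure _).inter ev.isClosed_ker
  refine not_daugavet_of (X := C01 ⧸ Z')
    ⟨Z'.liftQ (ev : C01 →ₗ[ℝ] ℝ) hle, ev.continuous.quotient_lift _⟩ (Z'.mkQ 1) rfl fun q => ?_
  refine le_of_forall_pos_le_add fun ε hε => ?_
  obtain ⟨m, rfl, hm⟩ := Submodule.Quotient.norm_mk_lt (S := Z') q (half_pos hε)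
  obtain ⟨n, hn⟩ := muntz_approx Λ hpos htop m (ε/2) (half_pos hε)
  have hz : (m 1) • monomial (Λ n) (hpos n) - (m 1) • (1 : C01) ∈ Z' := by
    rw [← smul_sub]
    refine Z'.smul_mem _ ⟨?_, ?_⟩
    · refine Submodule.le_topologicalClosure _ (Submodule.sub_mem _ ?_ ?_)
      · exact Submodule.subset_span (Or.inr ⟨n, rfl⟩)
      · exact Submodule.subset_span (Or.inl rfl)
    · change ((1 : Set.Icc (0:ℝ) 1) : ℝ) ^ (Λ n) - 1 = 0
      simp
  have e1 : (Submodule.Quotient.mk (m + (m 1) • (-(1 : C01))) : C01 ⧸ Z') =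
      Submodule.Quotient.mk (m - (m 1) • monomial (Λ n) (hpos n)) := by
    rw [Submodule.Quotient.eq]
    convert hz using 1
    simp only [smul_neg]
    abel
  change ‖(Submodule.Quotient.mk (m + (m 1) • (-(1 : C01))) : C01 ⧸ Z')‖ ≤ _
  rw [e1]
  have := Submodule.Quotient.norm_mk_le Z' (m - (m 1) • monomial (Λ n) (hpos n))
  linarith
end

section
/- There exists a closed subspace Z of C[0,1] that is isomorphic (linearly homeomorphic) to c₀ and is not poor in C[0,1]; i.e., there exists a closed subspace Z̃ ⊆ Z such that C[0,1]/Z̃ does not have the Daugavet property. -/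
/-- The Banach space `c₀` of real sequences converging to `0`, with the sup norm. -/
abbrev c0 : Type := ZeroAtInftyContinuousMap ℕ ℝ

namespace C0Aux

open Filter Topology

/-- the ramp functions -/
noncomputable def phi (n : ℕ) : C01 :=
  ⟨fun t => max 0 (min 1 (2 ^ n * (t : ℝ) - 1)), by fun_prop⟩

lemma phi_apply (n : ℕ) (t : Set.Icc (0 : ℝ) 1) :
    phi n t = max 0 (min 1 (2 ^ n * (t : ℝ) - 1)) := rfl

lemma phi_nonneg (n t) : 0 ≤ phi n t := by rw [phi_apply]; exact le_max_left _ _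

lemma phi_le_one (n t) : phi n t ≤ 1 := by rw [phi_apply]; simp

lemma phi_zero_left (t) : phi 0 t = 0 := by
  have := t.2.2
  rw [phi_apply, max_eq_left]
  apply (min_le_right _ _).trans
  simp; linarith

lemma phi_mono (n t) : phi n t ≤ phi (n + 1) t := by
  have := t.2.1
  rw [phi_apply, phi_apply]
  gcongr
  · norm_num
  · omega

/-- bump functions -/
noncomputable def bump (n : ℕ) : C01 := phi (n + 1) - phi n

lemma bump_nonneg (n t) : 0 ≤ bump n t := by
  have := phi_mono n t
  simp only [bump, ContinuousMap.sub_apply]; linarith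

lemma sum_bump (N : ℕ) (t) : ∑ n ∈ Finset.range N, bump n t = phi N t := by
  have := Finset.sum_range_sub (fun n => phi n t) N
  simp only [phi_zero_left, sub_zero] at this
  simpa only [bump, ContinuousMap.sub_apply] using this

lemma sum_bump_le (T : Finset ℕ) (t) : ∑ n ∈ T, bump n t ≤ 1 := by
  obtain ⟨N, hN⟩ := T.exists_nat_subset_range
  calc ∑ n ∈ T, bump n t ≤ ∑ n ∈ Finset.range N, bump n t :=
        Finset.sum_le_sum_of_subset_of_nonneg hN (fun _ _ _ => bump_nonneg _ _)
    _ ≤ 1 := by rw [sum_bump]; exact phi_le_one _ _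

lemma norm_sum_le (T : Finset ℕ) (a : ℕ → ℝ) (C : ℝ) (hC : 0 ≤ C) (h : ∀ n ∈ T, |a n| ≤ C) :
    ‖∑ n ∈ T, a n • bump n‖ ≤ C := by
  rw [ContinuousMap.norm_le _ hC]
  intro t
  rw [ContinuousMap.sum_apply, Real.norm_eq_abs]
  calc |∑ n ∈ T, (a n • bump n) t| ≤ ∑ n ∈ T, |(a n • bump n) t| := Finset.abs_sum_le_sum_abs _ _
    _ ≤ ∑ n ∈ T, C * bump n t := by
        apply Finset.sum_le_sum
        intro n hn
        rw [ContinuousMap.smul_apply, smul_eq_mul, abs_mul, abs_of_nonneg (bump_nonneg n t)]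
        exact mul_le_mul_of_nonneg_right (h n hn) (bump_nonneg n t)
    _ = C * ∑ n ∈ T, bump n t := by rw [Finset.mul_sum]
    _ ≤ C * 1 := mul_le_mul_of_nonneg_left (sum_bump_le T t) hC
    _ = C := mul_one C

lemma c0_tendsto (a : c0) : Tendsto (fun n => a n) cofinite (𝓝 0) := by
  have := a.zero_at_infty'
  rwa [Filter.cocompact_eq_cofinite] at this

lemma summable_J (a : c0) : Summable (fun n => a n • bump n) := by
  rw [summable_iff_vanishing_norm]
  intro ε hε
  have h := (c0_tendsto a).eventually (Metric.ball_mem_nhds 0 (half_pos hε))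
  have hf : {n | ¬ (a n ∈ Metric.ball (0:ℝ) (ε/2))}.Finite := h
  refine ⟨hf.toFinset, fun T hT => ?_⟩
  refine (norm_sum_le T _ (ε/2) (half_pos hε).le ?_).trans_lt (half_lt_self hε)
  intro n hn
  by_contra hcon
  have : n ∈ hf.toFinset := by
    simp only [Set.Finite.mem_toFinset, Set.mem_ofPred_eq, mem_ball_zero_iff, Real.norm_eq_abs]
    intro h; exact hcon h.le
  exact Finset.disjoint_left.1 hT hn this

/-- nodes -/
noncomputable def node (k : ℕ) : Set.Icc (0 : ℝ) 1 :=
  ⟨(2 ^ k)⁻¹, by positivity, inv_le_one_of_one_le₀ (one_le_pow₀ (by norm_num))⟩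

lemma phi_node_le {n k : ℕ} (h : n ≤ k) : phi n (node k) = 0 := by
  rw [phi_apply, max_eq_left]
  apply (min_le_right _ _).trans
  have : (2:ℝ) ^ n * (2 ^ k)⁻¹ ≤ 1 := by
    rw [mul_inv_le_iff₀ (by positivity), one_mul]
    exact pow_le_pow_right₀ (by norm_num) h
  simp only [node]; linarith

lemma phi_eq_one {n : ℕ} {t : Set.Icc (0 : ℝ) 1} (h : 2 ≤ 2 ^ n * (t : ℝ)) : phi n t = 1 := by
  rw [phi_apply, min_eq_left (by linarith)]; simp

lemma phi_node_gt {n k : ℕ} (h : k < n) : phi n (node k) = 1 := by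
  apply phi_eq_one
  simp only [node]
  rw [le_mul_inv_iff₀ (by positivity), ← pow_succ']
  exact pow_le_pow_right₀ (by norm_num) h

lemma bump_node (n k : ℕ) : bump n (node k) = if n = k then 1 else 0 := by
  simp only [bump, ContinuousMap.sub_apply]
  rcases lt_trichotomy n k with h | h | h
  · rw [phi_node_le h.le, phi_node_le h, if_neg h.ne]; simp
  · subst h; rw [phi_node_le le_rfl, phi_node_gt (Nat.lt_succ_self _)]; simp
  · rw [phi_node_gt h, phi_node_gt (by omega), if_neg h.ne']; simp

/-- the isometric embedding of c0 as a linear map -/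
noncomputable def Jlin : c0 →ₗ[ℝ] C01 where
  toFun a := ∑' n, a n • bump n
  map_add' a b := by
    rw [← (summable_J a).tsum_add (summable_J b)]
    simp [add_smul]
  map_smul' c a := by
    simp only [RingHom.id_apply]
    rw [← (summable_J a).tsum_const_smul c]
    simp [mul_smul]

lemma Jlin_apply (a : c0) (t) : Jlin a t = ∑' n, a n * bump n t := by
  have := (ContinuousMap.evalCLM ℝ t : C01 →L[ℝ] ℝ).map_tsum (summable_J a)
  simpa [Jlin] using this

lemma Jlin_node (a : c0) (k : ℕ) : Jlin a (node k) = a k := by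
  rw [Jlin_apply, tsum_eq_single k]
  · simp [bump_node]
  · intro n hn; simp [bump_node, hn]

lemma abs_le_norm_c0 (a : c0) (n : ℕ) : |a n| ≤ ‖a‖ := by
  rw [← ZeroAtInftyContinuousMap.norm_toBCF_eq_norm]
  exact a.toBCF.norm_coe_le_norm n

lemma norm_Jlin (a : c0) : ‖Jlin a‖ = ‖a‖ := by
  apply le_antisymm
  · exact le_of_tendsto (summable_J a).hasSum.norm
      (Eventually.of_forall fun T => norm_sum_le T _ _ (norm_nonneg _)
        (fun n _ => abs_le_norm_c0 a n))
  · rw [← ZeroAtInftyContinuousMap.norm_toBCF_eq_norm,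
      BoundedContinuousFunction.norm_le (norm_nonneg _)]
    intro k
    have := (Jlin a).norm_coe_le_norm (node k)
    rw [Jlin_node] at this
    exact this

/-- the isometric embedding of c0 -/
noncomputable def J : c0 →ₗᵢ[ℝ] C01 := ⟨Jlin, norm_Jlin⟩

/-- the subspace -/
noncomputable def Z : Submodule ℝ C01 := LinearMap.range J.toLinearMap

lemma Z_closed : IsClosed (Z : Set C01) := by
  have h : IsClosed (Set.range J) := J.isometry.isClosedEmbedding.isClosed_range
  have h2 : (Z : Set C01) = Set.range J := by ext; simp [Z]
  rw [h2]
  exact h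

lemma Z_iso : Nonempty (↥Z ≃L[ℝ] c0) :=
  ⟨J.equivRange.symm.toContinuousLinearEquiv⟩

/-- zero point -/
def pt : Set.Icc (0 : ℝ) 1 := ⟨0, le_rfl, zero_le_one⟩

lemma phi_pt (n) : phi n pt = 0 := by
  rw [phi_apply, max_eq_left]
  apply (min_le_right _ _).trans
  simp [pt]

lemma Z_pt {g : C01} (hg : g ∈ Z) : g pt = 0 := by
  obtain ⟨a, rfl⟩ := hg
  change Jlin a pt = 0
  rw [Jlin_apply]
  simp [bump, phi_pt]

/-- indicator sequence -/
noncomputable def ind (N : ℕ) : c0 where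
  toFun n := if n < N then 1 else 0
  continuous_toFun := continuous_of_discreteTopology
  zero_at_infty' := by
    rw [Filter.cocompact_eq_cofinite, Nat.cofinite_eq_atTop]
    apply tendsto_const_nhds.congr'
    filter_upwards [eventually_ge_atTop N] with n hn
    simp [not_lt.2 hn]

lemma ind_apply (N n : ℕ) : ind N n = if n < N then 1 else 0 := rfl

lemma phi_mem (N) : phi N ∈ Z := by
  refine ⟨ind N, ?_⟩
  change Jlin (ind N) = phi N
  ext t
  rw [Jlin_apply, tsum_eq_sum (s := Finset.range N), ← sum_bump]
  · apply Finset.sum_congr rfl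
    intro n hn
    simp [ind_apply, Finset.mem_range.1 hn]
  · intro n hn
    have : ¬ n < N := by simpa using hn
    simp [ind_apply, this]

lemma key (g : C01) : ‖(Submodule.Quotient.mk (g - g pt • (1 : C01)) : C01 ⧸ Z)‖ ≤ ‖g‖ := by
  apply le_of_forall_pos_le_add
  intro ε hε
  obtain ⟨δ, hδ, h⟩ := Metric.continuousAt_iff.1 (g.continuous.continuousAt (x := pt)) ε hε
  obtain ⟨N, hN⟩ := pow_unbounded_of_one_lt (2 / δ) (one_lt_two : (1:ℝ) < 2)
  have hmk : (Submodule.Quotient.mk (g - g pt • (1 : C01)) : C01 ⧸ Z) =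
      Submodule.Quotient.mk (g - g pt • (1 : C01) + g pt • phi N) := by
    rw [Submodule.Quotient.eq]
    simpa using Z.smul_mem (g pt) (phi_mem N)
  rw [hmk]
  refine (Submodule.Quotient.norm_mk_le Z _).trans ?_
  rw [ContinuousMap.norm_le _ (by positivity)]
  intro t
  have hval : (g - g pt • (1 : C01) + g pt • phi N) t = (g t - g pt) + g pt * phi N t := by
    simp
  rw [hval]
  rcases lt_or_ge (t : ℝ) δ with ht | ht
  · have h1 : |g t - g pt| < ε := by
      have := @h t (by
        rw [Subtype.dist_eq, Real.dist_eq]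
        simp only [pt, sub_zero]
        rwa [abs_of_nonneg t.2.1])
      rwa [Real.dist_eq] at this
    have h2 : |g pt * phi N t| ≤ ‖g‖ := by
      rw [abs_mul, abs_of_nonneg (phi_nonneg N t)]
      exact (mul_le_of_le_one_right (abs_nonneg _) (phi_le_one _ _)).trans (g.norm_coe_le_norm pt)
    refine (norm_add_le _ _).trans ?_
    rw [Real.norm_eq_abs, Real.norm_eq_abs]; linarith
  · have h1 : phi N t = 1 := by
      apply phi_eq_one
      rw [div_lt_iff₀ hδ] at hN
      exact hN.le.trans (mul_le_mul_of_nonneg_left ht (by positivity))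
    rw [h1]
    have := g.norm_coe_le_norm t
    simp only [mul_one, sub_add_cancel]
    linarith

/-- evaluation at zero on the quotient, as linear map -/
noncomputable def ev0 : (C01 ⧸ Z) →ₗ[ℝ] ℝ :=
  Z.liftQ (ContinuousMap.evalCLM ℝ pt : C01 →L[ℝ] ℝ).toLinearMap (fun g hg => by
    simpa using Z_pt hg)

lemma ev0_mk (g : C01) : ev0 (Submodule.Quotient.mk g) = g pt := rfl

lemma exists_rep (x : C01 ⧸ Z) {ε : ℝ} (hε : 0 < ε) :
    ∃ g : C01, Submodule.Quotient.mk g = x ∧ ‖g‖ < ‖x‖ + ε :=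
  Submodule.Quotient.norm_mk_lt x hε

lemma abstract_not {X : Type*} [SeminormedAddCommGroup X] [NormedSpace ℝ X]
    (f : X →ₗ[ℝ] ℝ) (e : X) (hf : ∀ x, ‖f x‖ ≤ ‖x‖) (he : f e = 1)
    (h : ∀ x, ‖x - f x • e‖ ≤ ‖x‖) : ¬ DaugavetProperty X := by
  intro hD
  let ev : X →L[ℝ] ℝ := f.mkContinuous 1 (fun x => by rw [one_mul]; exact hf x)
  have hev : ∀ x, ev x = f x := fun x => rfl
  have h1 := hD ev (-e)
  have h2 : ‖ContinuousLinearMap.id ℝ X + ev.smulRight (-e)‖ ≤ 1 := by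
    refine ContinuousLinearMap.opNorm_le_bound _ zero_le_one (fun x => ?_)
    rw [one_mul]
    have : (ContinuousLinearMap.id ℝ X + ev.smulRight (-e)) x = x - f x • e := by
      simp [hev, sub_eq_add_neg]
    rw [this]
    exact h x
  have h3 : ‖ev.smulRight (-e)‖ ≤ 0 := by linarith
  have h4 := (ev.smulRight (-e)).le_opNorm e
  have h6 : ‖(ev.smulRight (-e)) e‖ ≤ 0 :=
      h4.trans (mul_nonpos_of_nonpos_of_nonneg h3 (norm_nonneg _))
  have h7 : (ev.smulRight (-e)) e = -e := by simp [hev, he]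
  rw [h7, norm_neg] at h6
  have h8 := hf e
  rw [he, norm_one] at h8
  linarith

lemma not_daugavet : ¬ DaugavetProperty (C01 ⧸ Z) := by
  refine abstract_not ev0 (Submodule.Quotient.mk (1 : C01)) (fun x => ?_) (ev0_mk 1) (fun x => ?_)
  · apply le_of_forall_pos_le_add
    intro ε hε
    obtain ⟨g, rfl, hg⟩ := exists_rep x hε
    rw [ev0_mk]
    exact (g.norm_coe_le_norm pt).trans hg.le
  · apply le_of_forall_pos_le_add
    intro ε hε
    obtain ⟨g, rfl, hg⟩ := exists_rep x hε
    exact (key g).trans hg.le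

end C0Aux

/-- There is a closed subspace of `C[0,1]` isomorphic to `c₀` that is not poor in
`C[0,1]`: some closed subspace `Z̃ ⊆ Z` yields a quotient without the Daugavet
property. -/
theorem exists_c0_subspace_not_poor :
    ∃ Z : Submodule ℝ C01, IsClosed (Z : Set C01) ∧ Nonempty (↥Z ≃L[ℝ] c0) ∧
      ∃ Z' : Submodule ℝ C01, Z' ≤ Z ∧ IsClosed (Z' : Set C01) ∧
        ¬ DaugavetProperty (C01 ⧸ Z') := by
  exact ⟨C0Aux.Z, C0Aux.Z_closed, C0Aux.Z_iso, C0Aux.Z, le_rfl, C0Aux.Z_closed, C0Aux.not_daugavet⟩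
end

section
/- There exists a closed subspace Z of C[0,1] whose dual Z* is separable, such that the quotient space C[0,1]/Z does not have the Daugavet property. -/
section General

variable {E : Type*} [NormedAddCommGroup E] [NormedSpace ℝ E]

lemma dual_ext (h : ℕ → E) (Z : Submodule ℝ E)
    (hZ : Z = (Submodule.span ℝ (Set.range h)).topologicalClosure)
    (hm : ∀ n, h n ∈ Z) (φ : Z →L[ℝ] ℝ) (h0 : ∀ n, φ ⟨h n, hm n⟩ = 0) : φ = 0 := by
  have hZc : IsClosed (Z : Set E) := by
    rw [hZ]; exact Submodule.isClosed_topologicalClosure _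
  have hcl : IsClosed (((LinearMap.ker φ.toLinearMap).map Z.subtype : Submodule ℝ E) :
      Set E) := by
    rw [Submodule.map_coe]
    apply hZc.isClosedEmbedding_subtypeVal.isClosedMap
    exact φ.isClosed_ker
  have hle : Z ≤ (LinearMap.ker φ.toLinearMap).map Z.subtype := by
    refine hZ.le.trans ?_
    apply Submodule.topologicalClosure_minimal _ _ hcl
    rw [Submodule.span_le]
    rintro _ ⟨n, rfl⟩
    exact ⟨⟨h n, hm n⟩, h0 n, rfl⟩
  ext z
  obtain ⟨w, hw, hwz⟩ := hle z.2
  have : w = z := Subtype.ext hwz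
  subst this
  exact hw

lemma sum_abs_le (h : ℕ → E)
    (hb : ∀ (N : ℕ) (c : ℕ → ℝ), (∀ n, |c n| ≤ 1) →
      ‖∑ n ∈ Finset.range N, c n • h n‖ ≤ 1) (φ : E →L[ℝ] ℝ) (N : ℕ) :
    ∑ n ∈ Finset.range N, |φ (h n)| ≤ ‖φ‖ := by
  set c : ℕ → ℝ := fun n => (SignType.sign (φ (h n)) : ℝ) with hc
  set z : E := ∑ n ∈ Finset.range N, c n • h n with hz
  have h1 : φ z = ∑ n ∈ Finset.range N, |φ (h n)| := by
    rw [hz, map_sum]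
    apply Finset.sum_congr rfl
    intro n _
    rw [map_smul, smul_eq_mul, hc]
    exact sign_mul_self _
  have h2 : ‖z‖ ≤ 1 := by
    apply hb
    intro n
    rcases lt_trichotomy (φ (h n)) 0 with h | h | h <;> simp [hc, h]
  rw [← h1]
  calc φ z ≤ ‖φ z‖ := le_abs_self _
    _ ≤ ‖φ‖ * ‖z‖ := φ.le_opNorm z
    _ ≤ ‖φ‖ := mul_le_of_le_one_right (norm_nonneg _) h2

lemma dual_hasSum (h : ℕ → E)
    (hext : ∀ φ : E →L[ℝ] ℝ, (∀ n, φ (h n) = 0) → φ = 0)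
    (hb : ∀ (N : ℕ) (c : ℕ → ℝ), (∀ n, |c n| ≤ 1) →
      ‖∑ n ∈ Finset.range N, c n • h n‖ ≤ 1)
    (ev : ℕ → E →L[ℝ] ℝ) (hev : ∀ n, ‖ev n‖ ≤ 1)
    (hbi : ∀ n m, ev n (h m) = if n = m then 1 else 0) (φ : E →L[ℝ] ℝ) :
    HasSum (fun n => φ (h n) • ev n) φ := by
  have hs : Summable (fun n => |φ (h n)|) :=
    summable_of_sum_range_le (fun _ => abs_nonneg _) (sum_abs_le h hb φ)
  have hs2 : Summable (fun n => φ (h n) • ev n) := by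
    apply Summable.of_norm_bounded hs
    intro n
    rw [norm_smul]
    exact mul_le_of_le_one_right (norm_nonneg _) (hev n)
  obtain ⟨ψ, hψ⟩ := hs2
  have : ψ - φ = 0 := by
    apply hext
    intro m
    have h1 : HasSum (fun n => (φ (h n) • ev n) (h m)) (ψ (h m)) :=
      hψ.mapL (ContinuousLinearMap.apply ℝ ℝ (h m))
    have h2 : HasSum (fun n => (φ (h n) • ev n) (h m)) (φ (h m)) := by
      have := hasSum_ite_eq m (φ (h m))
      convert this using 2 with n
      simp only [ContinuousLinearMap.smul_apply, hbi, smul_eq_mul]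
      split_ifs with h
      · subst h; simp
      · simp
    simp [h1.unique h2]
  rwa [sub_eq_zero.1 this] at hψ

lemma dual_separable_aux (h : ℕ → E)
    (hext : ∀ φ : E →L[ℝ] ℝ, (∀ n, φ (h n) = 0) → φ = 0)
    (hb : ∀ (N : ℕ) (c : ℕ → ℝ), (∀ n, |c n| ≤ 1) →
      ‖∑ n ∈ Finset.range N, c n • h n‖ ≤ 1)
    (ev : ℕ → E →L[ℝ] ℝ) (hev : ∀ n, ‖ev n‖ ≤ 1)
    (hbi : ∀ n m, ev n (h m) = if n = m then 1 else 0) :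
    TopologicalSpace.SeparableSpace (E →L[ℝ] ℝ) := by
  have h1 : TopologicalSpace.IsSeparable
      (closure (Submodule.span ℝ (Set.range ev) : Set (E →L[ℝ] ℝ))) :=
    ((Set.countable_range ev).isSeparable.span (R := ℝ)).closure
  rw [← TopologicalSpace.isSeparable_univ_iff]
  apply h1.mono
  intro φ _
  apply mem_closure_of_tendsto (dual_hasSum h hext hb ev hev hbi φ)
  filter_upwards with s
  exact Submodule.sum_mem _ fun i _ =>
    Submodule.smul_mem _ _ (Submodule.subset_span ⟨i, rfl⟩)

lemma dual_separable (h : ℕ → E)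
    (hb : ∀ (N : ℕ) (c : ℕ → ℝ), (∀ n, |c n| ≤ 1) →
      ‖∑ n ∈ Finset.range N, c n • h n‖ ≤ 1)
    (ev : ℕ → E →L[ℝ] ℝ) (hev : ∀ n, ‖ev n‖ ≤ 1)
    (hbi : ∀ n m, ev n (h m) = if n = m then 1 else 0) :
    TopologicalSpace.SeparableSpace
      (↥(Submodule.span ℝ (Set.range h)).topologicalClosure →L[ℝ] ℝ) := by
  generalize hZ : (Submodule.span ℝ (Set.range h)).topologicalClosure = Z
  have hm : ∀ n, h n ∈ Z := fun n => by
    rw [← hZ]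
    exact Submodule.le_topologicalClosure _ (Submodule.subset_span ⟨n, rfl⟩)
  refine dual_separable_aux (E := Z) (fun n => ⟨h n, hm n⟩)
    (fun φ => dual_ext h Z hZ.symm hm φ) ?_ (fun n => (ev n).comp Z.subtypeL) ?_
    (fun n m => hbi n m)
  · intro N c hc
    have := hb N c hc
    have e : ((∑ n ∈ Finset.range N, c n • (⟨h n, hm n⟩ : Z) : Z) : E)
      = ∑ n ∈ Finset.range N, c n • h n := by simp
    rw [← e] at this
    exact this
  · exact fun n => ContinuousLinearMap.opNorm_le_bound _ zero_le_one fun z =>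
      (ev n).le_of_opNorm_le (hev n) (z : E)

lemma not_daug (Z : Submodule ℝ E) (G : E →L[ℝ] ℝ) (hG : ‖G‖ ≤ 1) (hGZ : ∀ z ∈ Z, G z = 0)
    (e : E) (hGe : G e = 1)
    (hkey : ∀ (g : E) (ε : ℝ), 0 < ε → ∃ z ∈ Z, ‖g - G g • e + z‖ ≤ ‖g‖ + ε) :
    ¬ DaugavetProperty (E ⧸ Z) := by
  intro hD
  let F₀ : (E ⧸ Z) →ₗ[ℝ] ℝ := Z.liftQ G.toLinearMap hGZ
  have hF₀ : ∀ g : E, F₀ (Submodule.Quotient.mk g) = G g := fun g => rfl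
  have hb : ∀ q, ‖F₀ q‖ ≤ 1 * ‖q‖ := by
    intro q
    rw [one_mul]
    apply le_of_forall_pos_le_add
    intro ε hε
    obtain ⟨g, rfl, hg⟩ := Submodule.Quotient.norm_mk_lt q hε
    rw [hF₀]
    have := G.le_of_opNorm_le hG g
    linarith
  let F : (E ⧸ Z) →L[ℝ] ℝ := F₀.mkContinuous 1 hb
  have hF : ∀ g : E, F (Submodule.Quotient.mk g) = G g := fun g => rfl
  let u : E ⧸ Z := Submodule.Quotient.mk e
  have hu1 : F u = 1 := by rw [hF, hGe]
  have hu : 1 ≤ ‖u‖ := by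
    have := hb u
    have h2 : F₀ u = 1 := hu1
    rw [h2] at this
    simpa using this
  have hT := hD F (-u)
  have h1 : ‖ContinuousLinearMap.id ℝ (E ⧸ Z) + F.smulRight (-u)‖ ≤ 1 := by
    apply ContinuousLinearMap.opNorm_le_bound _ zero_le_one
    intro q
    rw [one_mul]
    apply le_of_forall_pos_le_add
    intro ε hε
    obtain ⟨g, rfl, hg⟩ := Submodule.Quotient.norm_mk_lt q (half_pos hε)
    obtain ⟨z, hz, hN⟩ := hkey g (ε / 2) (half_pos hε)
    have he : (ContinuousLinearMap.id ℝ (E ⧸ Z) + F.smulRight (-u)) (Submodule.Quotient.mk g)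
        = Submodule.Quotient.mk (g - G g • e + z) := by
      have hr : (Submodule.Quotient.mk z : E ⧸ Z) = 0 :=
        (Submodule.Quotient.mk_eq_zero _).2 hz
      rw [Submodule.Quotient.mk_add, Submodule.Quotient.mk_sub, Submodule.Quotient.mk_smul,
        hr, add_zero]
      simp only [ContinuousLinearMap.add_apply, ContinuousLinearMap.id_apply,
        ContinuousLinearMap.smulRight_apply, hF, smul_neg, sub_eq_add_neg]
      rfl
    rw [he]
    have := Submodule.Quotient.norm_mk_le Z (g - G g • e + z)
    linarith
  have h2 : 1 ≤ ‖F.smulRight (-u)‖ := by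
    have h3 := (F.smulRight (-u)).le_opNorm u
    rw [ContinuousLinearMap.smulRight_apply, hu1, one_smul, norm_neg] at h3
    by_contra! h4
    nlinarith
  linarith

end General

/-- Clamped ramp: zero on `[0, 2^{-n}]`, one on `[2^{1-n}, 1]`. -/
noncomputable def ramp (n : ℕ) : C01 :=
  ⟨fun t => max 0 (min 1 ((2 : ℝ) ^ n * t.1 - 1)), by fun_prop⟩

lemma ramp_apply (n : ℕ) (t : Set.Icc (0 : ℝ) 1) :
    ramp n t = max 0 (min 1 ((2 : ℝ) ^ n * t.1 - 1)) := rfl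

lemma ramp_zero : ramp 0 = 0 := by
  ext t
  rw [ramp_apply]
  have := t.2.2
  simp only [pow_zero, one_mul, ContinuousMap.zero_apply]
  apply max_eq_left
  exact (min_le_right _ _).trans (by linarith)

lemma ramp_nonneg (n : ℕ) (t) : 0 ≤ ramp n t := le_max_left _ _

lemma ramp_le_one (n : ℕ) (t) : ramp n t ≤ 1 :=
  max_le zero_le_one (min_le_left _ _)

lemma ramp_mono (n : ℕ) (t) : ramp n t ≤ ramp (n + 1) t := by
  rw [ramp_apply, ramp_apply]
  have h0 := t.2.1
  have h1 : (2 : ℝ) ^ n * t.1 ≤ 2 ^ (n + 1) * t.1 := by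
    gcongr <;> norm_num
  gcongr

/-- hat functions -/
noncomputable def hat (n : ℕ) : C01 := ramp (n + 1) - ramp n

lemma hat_nonneg (n : ℕ) (t) : 0 ≤ hat n t := by
  simp only [hat, ContinuousMap.sub_apply]
  linarith [ramp_mono n t]

lemma sum_hat (N : ℕ) : ∑ n ∈ Finset.range N, hat n = ramp N := by
  simp only [hat]
  rw [Finset.sum_range_sub, ramp_zero, sub_zero]

/-- the node `2^{-n}` -/
noncomputable def node (n : ℕ) : Set.Icc (0 : ℝ) 1 :=
  ⟨(1 / 2) ^ n, by positivity, pow_le_one₀ (by norm_num) (by norm_num)⟩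

lemma ramp_node (n m : ℕ) : ramp n (node m) = if m < n then 1 else 0 := by
  rw [ramp_apply]
  have hm : (0 : ℝ) < (1 / 2) ^ m := by positivity
  have e : (2 : ℝ) ^ m * (1 / 2) ^ m = 1 := by
    rw [← mul_pow]; norm_num
  simp only [node]
  split_ifs with h
  · have : (2 : ℝ) ^ (m + 1) ≤ 2 ^ n := pow_le_pow_right₀ (by norm_num) h
    have h2 : (2 : ℝ) ^ (m + 1) * (1 / 2) ^ m ≤ 2 ^ n * (1 / 2) ^ m := by gcongr
    have h3 : (2 : ℝ) ^ (m + 1) * (1 / 2) ^ m = 2 := by rw [pow_succ]; linarith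
    rw [min_eq_left (by linarith)]; norm_num
  · have : (2 : ℝ) ^ n ≤ 2 ^ m := pow_le_pow_right₀ (by norm_num) (not_lt.1 h)
    have h2 : (2 : ℝ) ^ n * (1 / 2) ^ m ≤ 2 ^ m * (1 / 2) ^ m := by gcongr
    exact max_eq_left ((min_le_right _ _).trans (by linarith))

lemma hat_node (n m : ℕ) : hat n (node m) = if m = n then 1 else 0 := by
  simp only [hat, ContinuousMap.sub_apply, ramp_node]
  split_ifs <;> first | omega | norm_num

/-- the origin of the interval -/
def origin : Set.Icc (0 : ℝ) 1 := ⟨0, by simp⟩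

lemma ramp_origin (n) : ramp n origin = 0 := by
  rw [ramp_apply]; simp [origin]

/-- evaluation functionals at a point, on `C[0,1]` -/
noncomputable def evC (t : Set.Icc (0 : ℝ) 1) : C01 →L[ℝ] ℝ := ContinuousMap.evalCLM ℝ t

lemma evC_apply (t) (f : C01) : evC t f = f t := rfl

lemma evC_norm (t) : ‖evC t‖ ≤ 1 :=
  ContinuousLinearMap.opNorm_le_bound _ zero_le_one fun f => by
    rw [one_mul]; exact f.norm_coe_le_norm t

lemma hat_bound (N : ℕ) (c : ℕ → ℝ) (hc : ∀ n, |c n| ≤ 1) :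
    ‖∑ n ∈ Finset.range N, c n • hat n‖ ≤ 1 := by
  rw [ContinuousMap.norm_le _ zero_le_one]
  intro t
  have e : (∑ n ∈ Finset.range N, c n • hat n) t = ∑ n ∈ Finset.range N, c n * hat n t := by
    simp [ContinuousMap.sum_apply]
  rw [e]
  calc _ ≤ ∑ n ∈ Finset.range N, ‖c n * hat n t‖ := norm_sum_le _ _
    _ ≤ ∑ n ∈ Finset.range N, hat n t := by
        apply Finset.sum_le_sum
        intro n _
        rw [norm_mul, Real.norm_of_nonneg (hat_nonneg n t)]
        exact mul_le_of_le_one_left (hat_nonneg n t) (hc n)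
    _ = ramp N t := by rw [← sum_hat, ContinuousMap.sum_apply]
    _ ≤ 1 := ramp_le_one N t

/-- The subspace, isometric to `c₀`. -/
noncomputable def ZZ : Submodule ℝ C01 := (Submodule.span ℝ (Set.range hat)).topologicalClosure

lemma ZZ_closed : IsClosed (ZZ : Set C01) := Submodule.isClosed_topologicalClosure _

lemma hat_mem (n : ℕ) : hat n ∈ ZZ :=
  Submodule.le_topologicalClosure _ (Submodule.subset_span ⟨n, rfl⟩)

lemma ramp_mem (n : ℕ) : ramp n ∈ ZZ := by
  rw [← sum_hat]
  exact Submodule.sum_mem _ fun i _ => hat_mem i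

lemma evC_origin_ZZ (z : C01) (hz : z ∈ ZZ) : evC origin z = 0 := by
  have hle : ZZ ≤ LinearMap.ker (evC origin).toLinearMap := by
    apply Submodule.topologicalClosure_minimal _ _ (evC origin).isClosed_ker
    rw [Submodule.span_le]
    rintro _ ⟨n, rfl⟩
    change hat n origin = 0
    simp [hat, ramp_origin]
  exact hle hz

lemma ZZ_sep : TopologicalSpace.SeparableSpace (↥ZZ →L[ℝ] ℝ) :=
  dual_separable (E := C01) hat hat_bound (fun n => evC (node n)) (fun n => evC_norm _)
    (fun n m => hat_node m n)

lemma key (g : C01) (ε : ℝ) (hε : 0 < ε) :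
    ∃ N, ‖g - g origin • (1 : C01) + g origin • ramp N‖ ≤ ‖g‖ + ε := by
  obtain ⟨δ, hδ, h⟩ := Metric.continuousAt_iff.1 (g.continuous.continuousAt (x := origin)) ε hε
  obtain ⟨N, hN⟩ := exists_pow_lt_of_lt_one (half_pos hδ) (by norm_num : (1 / 2 : ℝ) < 1)
  refine ⟨N, ?_⟩
  rw [ContinuousMap.norm_le _ (by positivity)]
  intro t
  have ht0 := t.2.1
  have e : (g - g origin • (1 : C01) + g origin • ramp N) t
      = (g t - g origin) + g origin * ramp N t := by simp
  rw [e]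
  by_cases ht : t.1 < δ
  · have h1 : ‖g t - g origin‖ < ε := by
      rw [← dist_eq_norm]
      apply h
      rw [Subtype.dist_eq, Real.dist_eq]
      simpa [origin, abs_of_nonneg ht0] using ht
    have h2 : ‖g origin * ramp N t‖ ≤ ‖g‖ := by
      rw [norm_mul, Real.norm_of_nonneg (ramp_nonneg N t)]
      exact (mul_le_of_le_one_right (norm_nonneg _) (ramp_le_one N t)).trans
        (g.norm_coe_le_norm _)
    linarith [norm_add_le (g t - g origin) (g origin * ramp N t)]
  · have h1 : ramp N t = 1 := by
      rw [ramp_apply]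
      have e : (2 : ℝ) ^ N * (1 / 2) ^ N = 1 := by
        rw [← mul_pow]; norm_num
      have h3 : (2 : ℝ) ^ N * (1 / 2) ^ N ≤ 2 ^ N * (t.1 / 2) := by
        gcongr
        linarith
      rw [min_eq_left (by linarith)]; norm_num
    rw [h1, mul_one, sub_add_cancel]
    linarith [g.norm_coe_le_norm t]

lemma ZZ_not_daug : ¬ DaugavetProperty (C01 ⧸ ZZ) :=
  not_daug (E := C01) ZZ (evC origin) (evC_norm _) evC_origin_ZZ 1 rfl fun g ε hε => by
    obtain ⟨N, hN⟩ := key g ε hε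
    exact ⟨g origin • ramp N, Submodule.smul_mem _ _ (ramp_mem N), hN⟩

/-- There is a closed subspace `Z` of `C[0,1]` with separable dual such that
`C[0,1]/Z` does not have the Daugavet property. -/
theorem exists_separable_dual_subspace_quotient_not_daugavet :
    ∃ Z : Submodule ℝ C01, IsClosed (Z : Set C01) ∧
      TopologicalSpace.SeparableSpace (↥Z →L[ℝ] ℝ) ∧
      ¬ DaugavetProperty (C01 ⧸ Z) := by
  exact ⟨ZZ, ZZ_closed, ZZ_sep, ZZ_not_daug⟩
end
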